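/- arXiv:1705.09195 — 2 statements merged into one kernel-verified Lean document; each statement's English description precedes it below -/
import Mathlib

section
/- Let X ⊆ P² be a k-configuration of type (1,2,…,s) with s ≥ 2, and suppose there are exactly s + 1 lines in P² containing exactly s points of X. Then for every integer m ≥ 2, ΔH_{mX}(m·s − 1) = s + 1. -/
/-- The projective plane over a field `K`, as the projectivization of `K³`. -/
abbrev P2 (K : Type) [Field K] := Projectivization K (Fin 3 → K)

/-- A line in `P2 K`: a 2-dimensional linear subspace of `K³`. -/
structure ProjLine (K : Type) [Field K] where
  toSubmodule : Submodule K (Fin 3 → K)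
  finrank_eq_two : Module.finrank K toSubmodule = 2

/-- The set of points of `P2 K` lying on a line. -/
def ProjLine.points {K : Type} [Field K] (L : ProjLine K) : Set (P2 K) :=
  {p | p.submodule ≤ L.toSubmodule}

/-- The homogeneous prime ideal of a point of `P2 K`: the ideal generated by
the linear forms vanishing at the point. -/
noncomputable def pointIdeal {K : Type} [Field K] (p : P2 K) :
    Ideal (MvPolynomial (Fin 3) K) :=
  Ideal.span {f | f.IsHomogeneous 1 ∧ MvPolynomial.eval p.rep f = 0}

/-- The defining ideal `I_{mX} = ⋂_{P ∈ X} I_P^m` of the fat point scheme `mX`. -/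
noncomputable def fatIdeal {K : Type} [Field K] (X : Set (P2 K)) (m : ℕ) :
    Ideal (MvPolynomial (Fin 3) K) :=
  ⨅ p ∈ X, (pointIdeal p) ^ m

/-- The Hilbert function of `R/I`: `H(t) = dim_K R_t - dim_K I_t`. -/
noncomputable def hilb {K : Type} [Field K] (I : Ideal (MvPolynomial (Fin 3) K)) (t : ℕ) : ℕ :=
  Module.finrank K ↥(MvPolynomial.homogeneousSubmodule (Fin 3) K t) -
    Module.finrank K ↥(Submodule.restrictScalars K (I : Submodule (MvPolynomial (Fin 3) K) (MvPolynomial (Fin 3) K)) ⊓ MvPolynomial.homogeneousSubmodule (Fin 3) K t)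

/-- The Hilbert function extended to `ℤ`, with `H(t) = 0` for `t < 0`. -/
noncomputable def hilbZ {K : Type} [Field K] (I : Ideal (MvPolynomial (Fin 3) K)) (t : ℤ) : ℤ :=
  if t < 0 then 0 else hilb I t.toNat

/-- The first difference `ΔH(t) = H(t) - H(t-1)` of the Hilbert function. -/
noncomputable def deltaHilb {K : Type} [Field K] (I : Ideal (MvPolynomial (Fin 3) K)) (t : ℤ) : ℤ :=
  hilbZ I t - hilbZ I (t - 1)

/-- `X` is a k-configuration of type `(d 0, …, d (s-1))` defined using the subsets
`Xs 0, …, Xs (s-1)` and the (distinct) lines `Ls 0, …, Ls (s-1)`. -/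
structure IsKConfig {K : Type} [Field K] {s : ℕ} (X : Set (P2 K)) (d : Fin s → ℕ)
    (Xs : Fin s → Set (P2 K)) (Ls : Fin s → ProjLine K) : Prop where
  one_le : ∀ i, 1 ≤ d i
  strictMono : StrictMono d
  lines_distinct : Function.Injective Ls
  union_eq : X = ⋃ i, Xs i
  card_eq : ∀ i, (Xs i).ncard = d i
  subset_line : ∀ i, Xs i ⊆ (Ls i).points
  not_mem : ∀ i j : Fin s, j < i → ∀ p ∈ Xs j, p ∉ (Ls i).points

open MvPolynomial in
theorem aux_finrank_hom {K : Type} [Field K] (t : ℕ) :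
    Module.finrank K ↥(homogeneousSubmodule (Fin 3) K t) = (t + 2).choose 2 := by
  have e : homogeneousSubmodule (Fin 3) K t =
      AddMonoidAlgebra.supported K K {d : Fin 3 →₀ ℕ | d.degree = t} :=
    homogeneousSubmodule_eq_finsupp_supported (Fin 3) K t
  have hset : {d : Fin 3 →₀ ℕ | d.degree = t} =
      ((Finset.finsuppAntidiag (Finset.univ : Finset (Fin 3)) t : Finset (Fin 3 →₀ ℕ)) :
        Set (Fin 3 →₀ ℕ)) := by
    ext d
    simp [Finsupp.degree_eq_sum]
  rw [e, hset]
  rw [LinearEquiv.finrank_eq (AddMonoidAlgebra.supportedEquivFinsupp (R := K) (S := K) _)]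
  rw [Module.finrank_finsupp_self]
  simp only [Finset.coe_sort_coe, Fintype.card_coe]
  rw [Finset.card_finsuppAntidiag_nat_eq_choose]
  simp only [Finset.card_univ, Fintype.card_fin]
  have : 3 + t - 1 = t + 2 := by omega
  rw [this, ← Nat.choose_symm_of_eq_add (show t + 2 = 2 + t by omega)]

open MvPolynomial in
instance aux_fd {K : Type} [Field K] (t : ℕ) :
    FiniteDimensional K ↥(homogeneousSubmodule (Fin 3) K t) :=
  Module.Finite.iff_fg.mpr (homogeneousSubmodule_fg (Fin 3) K t)

open MvPolynomial in
theorem aux_hom_quot {K : Type} [Field K] {F g : MvPolynomial (Fin 3) K} {a t : ℕ}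
    (hF : F.IsHomogeneous a) (hF0 : F ≠ 0) (h : (F * g).IsHomogeneous t) :
    (t < a → g = 0) ∧ (a ≤ t → g.IsHomogeneous (t - a)) := by
  classical
  let _ : GradedAlgebra (homogeneousSubmodule (Fin 3) K) := MvPolynomial.gradedAlgebra
  have h1 : (DirectSum.decompose (homogeneousSubmodule (Fin 3) K) (F * g) t :
      MvPolynomial (Fin 3) K) = F * g :=
    DirectSum.decompose_of_mem_same (homogeneousSubmodule (Fin 3) K)
      (show F * g ∈ homogeneousSubmodule (Fin 3) K t from h)
  constructor
  · intro hlt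
    rw [DirectSum.coe_decompose_mul_of_left_mem_of_not_le (homogeneousSubmodule (Fin 3) K)
      (show F ∈ homogeneousSubmodule (Fin 3) K a from hF) (by omega)] at h1
    rcases mul_eq_zero.mp h1.symm with h2 | h2
    · exact absurd h2 hF0
    · exact h2
  · intro hle
    rw [DirectSum.coe_decompose_mul_of_left_mem_of_le (homogeneousSubmodule (Fin 3) K)
      (show F ∈ homogeneousSubmodule (Fin 3) K a from hF) hle] at h1
    have h2 := mul_left_cancel₀ hF0 h1
    have h3 := (DirectSum.decompose (homogeneousSubmodule (Fin 3) K) g (t - a)).2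
    rw [h2] at h3
    exact h3

/-- linear form with coefficient vector `c` -/
noncomputable def lin {K : Type} [Field K] (c : Fin 3 → K) : MvPolynomial (Fin 3) K :=
  ∑ i, MvPolynomial.C (c i) * MvPolynomial.X i

section linsec
open MvPolynomial
variable {K : Type} [Field K]

theorem lin_eval (c v : Fin 3 → K) : eval v (lin c) = c ⬝ᵥ v := by
  simp [lin, dotProduct]

theorem lin_hom (c : Fin 3 → K) : (lin c).IsHomogeneous 1 := by
  apply IsHomogeneous.sum
  intro i _
  exact isHomogeneous_C_mul_X _ _

theorem lin_aeval {A : Type} [CommRing A] [Algebra K A] (c : Fin 3 → K) (g : Fin 3 → A) :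
    aeval g (lin c) = ∑ i, algebraMap K A (c i) * g i := by
  simp [lin]

theorem lin_ne_zero {c : Fin 3 → K} (hc : c ≠ 0) : lin c ≠ 0 := by
  intro h
  apply hc
  ext i
  have := lin_eval c (Pi.single i 1)
  rw [h] at this
  simpa using this.symm

theorem exists_lin {f : MvPolynomial (Fin 3) K} (hf : f.IsHomogeneous 1) :
    ∃ c, f = lin c := by
  have h : f ∈ homogeneousSubmodule (Fin 3) K 1 := hf
  rw [homogeneousSubmodule_one_eq_span_X, Submodule.mem_span_range_iff_exists_fun] at h
  obtain ⟨c, hc⟩ := h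
  refine ⟨c, ?_⟩
  rw [← hc, lin]
  simp [smul_eq_C_mul]

/-- substitution killing `lin c` -/
noncomputable def subst (c : Fin 3 → K) (j : Fin 3) :
    MvPolynomial (Fin 3) K →ₐ[K] MvPolynomial (Fin 3) K :=
  aeval (fun i => if i = j then X j - C (c j)⁻¹ * lin c else X i)

theorem subst_lin (c : Fin 3 → K) (j : Fin 3) (hj : c j ≠ 0) : subst c j (lin c) = 0 := by
  rw [subst, lin_aeval]
  have : ∀ i, algebraMap K (MvPolynomial (Fin 3) K) (c i) *
      (if i = j then X j - C (c j)⁻¹ * lin c else X i) =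
      C (c i) * X i - (if i = j then lin c else 0) := by
    intro i
    split_ifs with h
    · subst h
      rw [mul_sub, ← mul_assoc, algebraMap_eq, ← C_mul, mul_inv_cancel₀ hj]
      simp
    · simp [algebraMap_eq]
  rw [Finset.sum_congr rfl (fun i _ => this i), Finset.sum_sub_distrib]
  simp [lin]

theorem lin_dvd_sub (c : Fin 3 → K) (j : Fin 3) (f : MvPolynomial (Fin 3) K) :
    lin c ∣ f - subst c j f := by
  rw [← Ideal.mem_span_singleton, ← Ideal.Quotient.eq]
  have : (Ideal.Quotient.mkₐ K (Ideal.span {lin c})) =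
      (Ideal.Quotient.mkₐ K (Ideal.span {lin c})).comp (subst c j) := by
    apply MvPolynomial.algHom_ext
    intro i
    simp only [subst, AlgHom.comp_apply, aeval_X]
    split_ifs with h
    · subst h
      simp only [Ideal.Quotient.mkₐ_eq_mk]
      rw [Ideal.Quotient.eq]
      simp only [sub_sub_cancel]
      exact Ideal.mul_mem_left _ _ (Ideal.mem_span_singleton_self _)
    · rfl
  exact DFunLike.congr_fun this f

theorem lin_dvd_iff (c : Fin 3 → K) (j : Fin 3) (hj : c j ≠ 0) (f : MvPolynomial (Fin 3) K) :
    lin c ∣ f ↔ subst c j f = 0 := by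
  constructor
  · rintro ⟨g, rfl⟩
    rw [map_mul, subst_lin c j hj, zero_mul]
  · intro h
    have := lin_dvd_sub c j f
    rwa [h, sub_zero] at this

theorem exists_coord {c : Fin 3 → K} (hc : c ≠ 0) : ∃ j, c j ≠ 0 := by
  by_contra! h
  exact hc (funext h)

theorem lin_prime {c : Fin 3 → K} (hc : c ≠ 0) : Prime (lin c) := by
  obtain ⟨j, hj⟩ := exists_coord hc
  refine ⟨lin_ne_zero hc, ?_, ?_⟩
  · intro h
    have h1 : lin c ∣ 1 := h.dvd
    rw [lin_dvd_iff c j hj, map_one] at h1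
    exact one_ne_zero h1
  · intro a b h
    rw [lin_dvd_iff c j hj, map_mul, mul_eq_zero] at h
    rwa [lin_dvd_iff c j hj, lin_dvd_iff c j hj]

theorem lin_dvd_of_vanish [Infinite K] {c : Fin 3 → K} (hc : c ≠ 0) (f : MvPolynomial (Fin 3) K)
    (h : ∀ v, c ⬝ᵥ v = 0 → eval v f = 0) : lin c ∣ f := by
  obtain ⟨j, hj⟩ := exists_coord hc
  rw [lin_dvd_iff c j hj]
  apply MvPolynomial.funext
  intro v
  rw [map_zero]
  have h1 : ∀ f, eval v (subst c j f) =
      eval (fun i => eval v (subst c j (X i))) f := by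
    intro f
    have : (aeval v : MvPolynomial (Fin 3) K →ₐ[K] K).comp (subst c j) =
        aeval (fun i => eval v (subst c j (X i))) := by
      apply MvPolynomial.algHom_ext
      intro i
      simp [aeval_eq_eval]
    have := DFunLike.congr_fun this f
    simpa [aeval_eq_eval] using this
  rw [h1]
  apply h
  rw [← lin_eval, ← h1, subst_lin c j hj, map_zero]

end linsec
section pointsec
open MvPolynomial
variable {K : Type} [Field K]

/-- the Rees-type homomorphism scaling the directions transverse to the point `p` -/
noncomputable def Phi (p lam : Fin 3 → K) :
    MvPolynomial (Fin 3) K →ₐ[K] Polynomial (MvPolynomial (Fin 3) K) :=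
  aeval (fun i => Polynomial.C (C (p i) * lin lam) +
    Polynomial.X * Polynomial.C (X i - C (p i) * lin lam))

theorem Phi_lin (p lam c : Fin 3 → K) :
    Phi p lam (lin c) = Polynomial.C (C (c ⬝ᵥ p) * lin lam) +
      Polynomial.X * Polynomial.C (lin c - C (c ⬝ᵥ p) * lin lam) := by
  have h : ∀ x : K, algebraMap K (Polynomial (MvPolynomial (Fin 3) K)) x =
    Polynomial.C (C x) := fun x => rfl
  rw [Phi, lin_aeval]
  simp only [h, dotProduct, lin, Fin.sum_univ_three, map_add, map_mul, map_sub]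
  ring

theorem Phi_mem_rees (P : P2 K) (lam : Fin 3 → K) (hl : lam ⬝ᵥ P.rep = 1)
    (f : MvPolynomial (Fin 3) K) : Phi P.rep lam f ∈ reesAlgebra (pointIdeal P) := by
  have hC : ∀ r : MvPolynomial (Fin 3) K, Polynomial.C r ∈ reesAlgebra (pointIdeal P) :=
    fun r => (reesAlgebra (pointIdeal P)).algebraMap_mem r
  induction f using MvPolynomial.induction_on with
  | C a =>
    have : Phi P.rep lam (C a) = Polynomial.C (C a) := (Phi P.rep lam).commutes a
    rw [this]
    exact hC _
  | add f g hf hg => rw [map_add]; exact add_mem hf hg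
  | mul_X f i hf =>
    rw [map_mul]
    refine mul_mem hf ?_
    rw [Phi, aeval_X]
    refine add_mem (hC _) ?_
    rw [mul_comm, Polynomial.C_mul_X_eq_monomial]
    apply reesAlgebra.monomial_mem.mpr
    rw [pow_one]
    apply Ideal.subset_span
    refine ⟨?_, ?_⟩
    · apply IsHomogeneous.sub (isHomogeneous_X _ _)
      exact (lin_hom lam).C_mul _
    · simp [lin_eval, hl]

theorem Phi_eval_one (p lam : Fin 3 → K) (f : MvPolynomial (Fin 3) K) :
    Polynomial.eval 1 (Phi p lam f) = f := by
  have : ((Polynomial.aeval (1 : MvPolynomial (Fin 3) K)).restrictScalars K).comp (Phi p lam) =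
      AlgHom.id K _ := by
    apply MvPolynomial.algHom_ext
    intro i
    simp [Phi]
  have := DFunLike.congr_fun this f
  simpa [Polynomial.aeval_def, Polynomial.eval₂_id] using this

theorem mem_pow_iff (P : P2 K) (lam : Fin 3 → K) (hl : lam ⬝ᵥ P.rep = 1) (k : ℕ)
    (f : MvPolynomial (Fin 3) K) :
    f ∈ pointIdeal P ^ k ↔ Polynomial.X ^ k ∣ Phi P.rep lam f := by
  constructor
  · intro h
    have h1 : Ideal.map (Phi P.rep lam) (pointIdeal P) ≤ Ideal.span {Polynomial.X} := by
      rw [pointIdeal, Ideal.map_span, Ideal.span_le]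
      rintro _ ⟨g, ⟨hg, hg0⟩, rfl⟩
      obtain ⟨c, rfl⟩ := exists_lin hg
      rw [lin_eval] at hg0
      rw [SetLike.mem_coe, Ideal.mem_span_singleton, Phi_lin, hg0]
      simp
    have h2 := Ideal.mem_map_of_mem (Phi P.rep lam) h
    rw [Ideal.map_pow] at h2
    have h3 := Ideal.pow_right_mono h1 k h2
    rwa [Ideal.span_singleton_pow, Ideal.mem_span_singleton] at h3
  · intro h
    rw [Polynomial.X_pow_dvd_iff] at h
    have h1 := (mem_reesAlgebra_iff _ _).mp (Phi_mem_rees P lam hl f)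
    rw [← Phi_eval_one P.rep lam f, Polynomial.eval_eq_sum_range]
    apply Ideal.sum_mem
    intro j _
    rw [one_pow, mul_one]
    by_cases hj : j < k
    · rw [h j hj]; exact zero_mem _
    · exact Ideal.pow_le_pow_right (by omega) (h1 j)

theorem exists_lam (P : P2 K) : ∃ lam : Fin 3 → K, lam ⬝ᵥ P.rep = 1 := by
  obtain ⟨j, hj⟩ := exists_coord P.rep_nonzero
  refine ⟨Pi.single j (P.rep j)⁻¹, ?_⟩
  simp [hj]

theorem lin_mem_point (P : P2 K) (c : Fin 3 → K) (hc : c ⬝ᵥ P.rep = 0) :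
    lin c ∈ pointIdeal P :=
  Ideal.subset_span ⟨lin_hom c, by rw [lin_eval, hc]⟩

theorem cancel_off (P : P2 K) (c : Fin 3 → K) (hc : c ⬝ᵥ P.rep ≠ 0) (k : ℕ)
    (h : MvPolynomial (Fin 3) K) (hm : lin c * h ∈ pointIdeal P ^ k) : h ∈ pointIdeal P ^ k := by
  obtain ⟨lam, hl⟩ := exists_lam P
  have hl0 : lam ≠ 0 := by rintro rfl; simp at hl
  rw [mem_pow_iff P lam hl] at hm ⊢
  rw [map_mul] at hm
  refine Prime.pow_dvd_of_dvd_mul_left Polynomial.prime_X k ?_ hm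
  rw [Phi_lin, Polynomial.X_dvd_iff]
  simp [hc, lin_ne_zero hl0]

theorem cancel_on (P : P2 K) (c : Fin 3 → K) (hc0 : c ≠ 0) (hc : c ⬝ᵥ P.rep = 0) (k : ℕ)
    (h : MvPolynomial (Fin 3) K) (hm : lin c * h ∈ pointIdeal P ^ (k + 1)) :
    h ∈ pointIdeal P ^ k := by
  obtain ⟨lam, hl⟩ := exists_lam P
  rw [mem_pow_iff P lam hl] at hm ⊢
  rw [map_mul, Phi_lin, hc] at hm
  simp only [C_0, zero_mul, Polynomial.C_0, zero_add, sub_zero] at hm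
  rw [pow_succ', mul_assoc] at hm
  have hm2 := (mul_dvd_mul_iff_left Polynomial.X_ne_zero).mp hm
  refine Prime.pow_dvd_of_dvd_mul_left Polynomial.prime_X k ?_ hm2
  rw [Polynomial.X_dvd_iff]
  simp [lin_ne_zero hc0]

theorem cancel_prod {ι : Type} [DecidableEq ι] (P : P2 K) (c : ι → Fin 3 → K) (hc0 : ∀ i, c i ≠ 0)
    (A : Finset ι) (k : ℕ) (h : MvPolynomial (Fin 3) K)
    [DecidablePred fun i => c i ⬝ᵥ P.rep = 0]
    (hm : (∏ i ∈ A, lin (c i)) * h ∈ pointIdeal P ^ (k + (A.filter (fun i => c i ⬝ᵥ P.rep = 0)).card)) :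
    h ∈ pointIdeal P ^ k := by
  induction A using Finset.induction_on generalizing k with
  | empty => simpa using hm
  | insert a A ha ih =>
    rw [Finset.prod_insert ha, mul_assoc, Finset.filter_insert] at hm
    split_ifs at hm with h0
    · rw [Finset.card_insert_of_notMem (by simp [ha]), ← add_assoc] at hm
      exact ih k (cancel_on P _ (hc0 a) h0 _ _ hm)
    · exact ih k (cancel_off P _ h0 _ _ hm)

theorem prod_mem_pt {ι : Type} [DecidableEq ι] (P : P2 K) (c : ι → Fin 3 → K)
    (A : Finset ι) [DecidablePred fun i => c i ⬝ᵥ P.rep = 0] :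
    (∏ i ∈ A, lin (c i)) ∈ pointIdeal P ^ (A.filter (fun i => c i ⬝ᵥ P.rep = 0)).card := by
  induction A using Finset.induction_on with
  | empty => simp
  | insert a A ha ih =>
    rw [Finset.prod_insert ha, Finset.filter_insert]
    split_ifs with h0
    · rw [Finset.card_insert_of_notMem (by simp [ha]), pow_succ']
      exact Ideal.mul_mem_mul (lin_mem_point P _ h0) ih
    · exact Ideal.mul_mem_left _ _ ih

theorem dim_one {A B : Submodule K (Fin 3 → K)} (hA : Module.finrank K A = 2) (hBA : B ≤ A)
    (hne : B ≠ A) {b w : Fin 3 → K} (hb : b ∈ B) (hb0 : b ≠ 0) (hw : w ∈ B) :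
    ∃ r : K, w = r • b := by
  have h1 : Module.finrank K B < 2 := hA ▸ Submodule.finrank_lt_finrank_of_lt (lt_of_le_of_ne hBA hne)
  have hb' : (⟨b, hb⟩ : B) ≠ 0 := fun h => hb0 (congrArg Subtype.val h)
  have : Module.finrank K B = 1 := by
    have : 0 < Module.finrank K B := Module.finrank_pos_iff_exists_ne_zero.mpr ⟨_, hb'⟩
    omega
  obtain ⟨r, hr⟩ := (finrank_eq_one_iff_of_nonzero' _ hb').mp this ⟨w, hw⟩
  exact ⟨r, (congrArg Subtype.val hr).symm⟩

/-- functional of a coefficient vector -/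
noncomputable def dotL (c : Fin 3 → K) : (Fin 3 → K) →ₗ[K] K := dotProductBilin K K c

theorem dotL_apply (c v : Fin 3 → K) : dotL c v = c ⬝ᵥ v := rfl

theorem finrank_ker_dotL {c : Fin 3 → K} (hc : c ≠ 0) :
    Module.finrank K (LinearMap.ker (dotL c)) = 2 := by
  have h0 : dotL c ≠ 0 := by
    intro h
    apply hc
    ext i
    have := DFunLike.congr_fun h (Pi.single i 1)
    simpa [dotL_apply] using this
  have := Module.Dual.finrank_ker_add_one_of_ne_zero (K := K) (f := dotL c) h0
  simp at this
  omega

theorem exists_common (c e : Fin 3 → K) : ∃ b : Fin 3 → K, b ≠ 0 ∧ c ⬝ᵥ b = 0 ∧ e ⬝ᵥ b = 0 := by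
  have h : LinearMap.ker ((dotL c).prod (dotL e)) ≠ ⊥ := by
    apply LinearMap.ker_ne_bot_of_finrank_lt
    simp
  obtain ⟨b, hb, hb0⟩ := Submodule.exists_mem_ne_zero_of_ne_bot h
  rw [LinearMap.ker_prod] at hb
  exact ⟨b, hb0, hb.1, hb.2⟩

theorem common_dim_one {c e : Fin 3 → K} (hc : c ≠ 0) {v : Fin 3 → K} (hcv : c ⬝ᵥ v = 0)
    (hev : e ⬝ᵥ v ≠ 0) {b w : Fin 3 → K} (hb0 : b ≠ 0) (hcb : c ⬝ᵥ b = 0) (heb : e ⬝ᵥ b = 0)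
    (hcw : c ⬝ᵥ w = 0) (hew : e ⬝ᵥ w = 0) : ∃ r : K, w = r • b := by
  refine dim_one (finrank_ker_dotL hc) (B := LinearMap.ker (dotL c) ⊓ LinearMap.ker (dotL e))
    inf_le_left ?_ ⟨hcb, heb⟩ hb0 ⟨hcw, hew⟩
  intro h
  have : v ∈ LinearMap.ker (dotL c) ⊓ LinearMap.ker (dotL e) := by rw [h]; exact hcv
  exact hev this.2

theorem P2_eq_of_smul {P Q : P2 K} (r : K) (h : P.rep = r • Q.rep) : P = Q := by
  rw [← P.mk_rep, ← Q.mk_rep, Projectivization.mk_eq_mk_iff']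
  exact ⟨r, h.symm⟩

theorem restrict_dvd (P : P2 K) (v b : Fin 3 → K) (α τ : K) (hα : α ≠ 0)
    (hP : P.rep = α • (v + τ • b)) (m : ℕ) (f : MvPolynomial (Fin 3) K)
    (hf : f ∈ pointIdeal P ^ m) :
    (Polynomial.X - Polynomial.C τ) ^ m ∣
      aeval (fun i => Polynomial.C (v i) + Polynomial.C (b i) * Polynomial.X) f := by
  set ψ : MvPolynomial (Fin 3) K →ₐ[K] Polynomial K :=
    aeval (fun i => Polynomial.C (v i) + Polynomial.C (b i) * Polynomial.X) with hψ
  have h1 : Ideal.map ψ (pointIdeal P) ≤ Ideal.span {Polynomial.X - Polynomial.C τ} := by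
    rw [pointIdeal, Ideal.map_span, Ideal.span_le]
    rintro _ ⟨g, ⟨hg, hg0⟩, rfl⟩
    obtain ⟨c, rfl⟩ := exists_lin hg
    rw [lin_eval, hP] at hg0
    have h2 : c ⬝ᵥ v + τ * (c ⬝ᵥ b) = 0 := by
      rw [dotProduct_smul, dotProduct_add, dotProduct_smul, smul_eq_mul, smul_eq_mul] at hg0
      exact (mul_eq_zero.mp hg0).resolve_left hα
    rw [SetLike.mem_coe, Ideal.mem_span_singleton]
    refine ⟨Polynomial.C (c ⬝ᵥ b), ?_⟩
    have h3 : ψ (lin c) = Polynomial.C (c ⬝ᵥ v) + Polynomial.C (c ⬝ᵥ b) * Polynomial.X := by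
      rw [hψ, lin_aeval]
      simp only [dotProduct, Fin.sum_univ_three, map_add, map_mul, Polynomial.algebraMap_eq]
      ring
    rw [h3, eq_neg_of_add_eq_zero_left h2, map_neg, map_mul]
    ring
  have h2 := Ideal.mem_map_of_mem ψ hf
  rw [Ideal.map_pow] at h2
  have h3 := Ideal.pow_right_mono h1 m h2
  rwa [Ideal.span_singleton_pow, Ideal.mem_span_singleton] at h3

theorem bezout [Infinite K] {c e : Fin 3 → K} (hc : c ≠ 0) (Y : Finset (P2 K))
    (hY : ∀ P ∈ Y, c ⬝ᵥ P.rep = 0) (hYe : ∀ P ∈ Y, e ⬝ᵥ P.rep ≠ 0) (m t : ℕ)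
    (f : MvPolynomial (Fin 3) K) (hf : ∀ P ∈ Y, f ∈ pointIdeal P ^ m) (hft : f.IsHomogeneous t)
    (ht : t < m * Y.card) : lin c ∣ f := by
  have hYn : Y.Nonempty := by
    rw [Finset.nonempty_iff_ne_empty]
    rintro rfl
    simp at ht
  have key : lin c ∣ f * lin e := by
    apply lin_dvd_of_vanish hc
    intro v hv
    rw [map_mul, lin_eval]
    by_cases hev : e ⬝ᵥ v = 0
    · rw [hev, mul_zero]
    · suffices h : eval v f = 0 by rw [h, zero_mul]
      obtain ⟨b, hb0, hcb, heb⟩ := exists_common c e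
      have hτ : ∀ P ∈ Y, ∃ τ : K, P.rep = ((e ⬝ᵥ P.rep) * (e ⬝ᵥ v)⁻¹) • (v + τ • b) := by
        intro P hP
        obtain ⟨r, hr⟩ := common_dim_one hc hv hev hb0 hcb heb
          (w := P.rep - ((e ⬝ᵥ P.rep) * (e ⬝ᵥ v)⁻¹) • v)
          (by rw [dotProduct_sub, dotProduct_smul, hY P hP, hv]; simp)
          (by rw [dotProduct_sub, dotProduct_smul, smul_eq_mul, mul_assoc, inv_mul_cancel₀ hev]; simp)
        refine ⟨((e ⬝ᵥ P.rep) * (e ⬝ᵥ v)⁻¹)⁻¹ * r, ?_⟩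
        rw [smul_add, smul_smul, ← mul_assoc, mul_inv_cancel₀
          (mul_ne_zero (hYe P hP) (inv_ne_zero hev)), one_mul, ← hr]
        simp
      choose! τ hτ using hτ
      have hinj : ∀ P ∈ Y, ∀ Q ∈ Y, τ P = τ Q → P = Q := by
        intro P hP Q hQ h
        refine P2_eq_of_smul (((e ⬝ᵥ P.rep) * (e ⬝ᵥ v)⁻¹) * ((e ⬝ᵥ Q.rep) * (e ⬝ᵥ v)⁻¹)⁻¹) ?_
        have h1 := hτ P hP
        have h2 := hτ Q hQ
        have h3 : v + τ Q • b = ((e ⬝ᵥ Q.rep) * (e ⬝ᵥ v)⁻¹)⁻¹ • Q.rep := by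
          rw [eq_inv_smul_iff₀ (mul_ne_zero (hYe Q hQ) (inv_ne_zero hev))]
          exact h2.symm
        rw [mul_smul, ← h3, ← h]
        exact h1
      set q : Polynomial K :=
        aeval (fun i => Polynomial.C (v i) + Polynomial.C (b i) * Polynomial.X) f with hq
      have hdvd : ∏ P ∈ Y, (Polynomial.X - Polynomial.C (τ P)) ^ m ∣ q := by
        apply Finset.prod_dvd_of_coprime
        · intro P hP Q hQ hPQ
          apply IsCoprime.pow
          apply Polynomial.isCoprime_X_sub_C_of_isUnit_sub
          rw [isUnit_iff_ne_zero, sub_ne_zero]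
          exact fun h => hPQ (hinj P hP Q hQ h)
        · intro P hP
          exact restrict_dvd P v b _ (τ P) (mul_ne_zero (hYe P hP) (inv_ne_zero hev)) (hτ P hP) m f
            (hf P hP)
      have hdeg : q.natDegree ≤ t * 1 := by
        apply MvPolynomial.aeval_natDegree_le _ hft.totalDegree_le
        intro i
        compute_degree
      have hdeg2 : (∏ P ∈ Y, (Polynomial.X - Polynomial.C (τ P)) ^ m).natDegree = m * Y.card := by
        rw [Polynomial.natDegree_prod_of_monic]
        · simp [mul_comm]
        · intro P _
          exact (Polynomial.monic_X_sub_C _).pow m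
      have hq0 : q = 0 := by
        apply Polynomial.eq_zero_of_dvd_of_natDegree_lt hdvd
        omega
      have hev0 : Polynomial.eval 0 q = eval v f := by
        have : (Polynomial.aeval (0 : K)).comp
            (aeval (fun i => Polynomial.C (v i) + Polynomial.C (b i) * Polynomial.X) :
              MvPolynomial (Fin 3) K →ₐ[K] Polynomial K) = aeval v := by
          apply MvPolynomial.algHom_ext
          intro i
          simp
        have := DFunLike.congr_fun this f
        simpa [Polynomial.aeval_def, aeval_eq_eval] using this
      rw [← hev0, hq0, Polynomial.eval_zero]
  rcases (lin_prime hc).dvd_or_dvd key with h | h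
  · exact h
  · exfalso
    obtain ⟨P, hP⟩ := hYn
    obtain ⟨g, hg⟩ := h
    have := congrArg (eval P.rep) hg
    rw [map_mul, lin_eval, lin_eval, hY P hP, zero_mul] at this
    exact hYe P hP this

end pointsec
section coresec
set_option linter.unusedSectionVars false
open MvPolynomial
variable {K : Type} [Field K]

/-- the combinatorial data of a star configuration with a general linear form `e` -/
structure StarData {ι : Type} [Fintype ι] (s : ℕ) (c : ι → Fin 3 → K)
    (X : Finset (P2 K)) (e : Fin 3 → K) : Prop where
  card : Fintype.card ι = s + 1
  ne_zero : ∀ i, c i ≠ 0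
  two : ∀ P ∈ X, ∃ A : Finset ι, A.card = 2 ∧ ∀ i, i ∈ A ↔ c i ⬝ᵥ P.rep = 0
  pair : ∀ i j, i ≠ j → ∃ P ∈ X, ∀ b, c i ⬝ᵥ b = 0 → c j ⬝ᵥ b = 0 → ∃ r : K, b = r • P.rep
  line : ∀ i, ∃ Y : Finset (P2 K), Y ⊆ X ∧ Y.card = s ∧ ∀ P ∈ Y, c i ⬝ᵥ P.rep = 0
  gen : ∀ P ∈ X, e ⬝ᵥ P.rep ≠ 0

theorem mem_fat (X : Finset (P2 K)) (m : ℕ) (f : MvPolynomial (Fin 3) K) :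
    f ∈ fatIdeal (X : Set (P2 K)) m ↔ ∀ P ∈ X, f ∈ pointIdeal P ^ m := by
  simp [fatIdeal, Submodule.mem_iInf]

variable {ι : Type} [Fintype ι] [DecidableEq ι] {s : ℕ} {c : ι → Fin 3 → K}
  {X : Finset (P2 K)} {e : Fin 3 → K}

theorem StarData.exQ (S : StarData s c X e) (i : ι) :
    ∃ b : Fin 3 → K, c i ⬝ᵥ b = 0 ∧ e ⬝ᵥ b = 0 ∧ ∀ j, j ≠ i → c j ⬝ᵥ b ≠ 0 := by
  obtain ⟨b, hb0, hc, he⟩ := exists_common (c i) e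
  refine ⟨b, hc, he, ?_⟩
  intro j hj hcj
  obtain ⟨P, hP, h⟩ := S.pair i j hj.symm
  obtain ⟨r, rfl⟩ := h b hc hcj
  rw [dotProduct_smul, smul_eq_mul] at he
  rcases mul_eq_zero.mp he with h | h
  · rw [h] at hb0; simp at hb0
  · exact S.gen P hP h

/-- product of all the lines but one -/
noncomputable def gprod (c : ι → Fin 3 → K) (i : ι) : MvPolynomial (Fin 3) K :=
  ∏ j ∈ Finset.univ.erase i, lin (c j)

theorem StarData.gprod_hom (S : StarData s c X e) (i : ι) : (gprod c i).IsHomogeneous s := by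
  have := IsHomogeneous.prod (Finset.univ.erase i) (fun j => lin (c j)) (fun _ => 1)
    (fun j _ => lin_hom (c j))
  rw [Finset.sum_const, Finset.card_erase_of_mem (Finset.mem_univ _), Finset.card_univ, S.card] at this
  simp only [Nat.add_sub_cancel, smul_eq_mul, mul_one] at this
  exact this

theorem StarData.gprod_mem (S : StarData s c X e) (i : ι) :
    gprod c i ∈ fatIdeal (X : Set (P2 K)) 1 := by
  classical
  rw [mem_fat]
  intro P hP
  refine Ideal.pow_le_pow_right ?_ (prod_mem_pt P c _)
  obtain ⟨A, hA, hAi⟩ := S.two P hP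
  have : A.erase i ⊆ (Finset.univ.erase i).filter (fun i => c i ⬝ᵥ P.rep = 0) := by
    intro j hj
    rw [Finset.mem_erase] at hj
    simp [hj.1, (hAi j).mp hj.2]
  have h1 := Finset.card_le_card this
  have h2 := Finset.pred_card_le_card_erase (s := A) (a := i)
  omega

theorem StarData.indep (S : StarData s c X e) (a : ι → K) (h : MvPolynomial (Fin 3) K)
    (hh : ∑ i, a i • gprod c i = lin e * h) : ∀ i, a i = 0 := by
  intro i
  obtain ⟨b, hc, he, hj⟩ := S.exQ i
  have h1 := congrArg (eval b) hh
  rw [map_mul, lin_eval, he, zero_mul, map_sum] at h1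
  rw [Finset.sum_eq_single i] at h1
  · rw [smul_eval] at h1
    refine (mul_eq_zero.mp h1).resolve_right ?_
    rw [gprod, map_prod]
    apply Finset.prod_ne_zero_iff.mpr
    intro j hj'
    rw [lin_eval]
    exact hj j (Finset.ne_of_mem_erase hj')
  · intro k _ hk
    rw [smul_eval, gprod, map_prod, Finset.prod_eq_zero (i := i), mul_zero]
    · simp [hk.symm]
    · rw [lin_eval, hc]
  · simp

theorem StarData.e_ne (S : StarData s c X e) (hs : 1 ≤ s) : e ≠ 0 := by
  have : 1 < Fintype.card ι := by rw [S.card]; omega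
  obtain ⟨i, j, hij⟩ := Fintype.one_lt_card_iff.mp this
  obtain ⟨P, hP, -⟩ := S.pair i j hij
  intro h
  apply S.gen P hP
  simp [h]

/-- multiplication by a polynomial -/
noncomputable def mulF (F : MvPolynomial (Fin 3) K) :
    MvPolynomial (Fin 3) K →ₗ[K] MvPolynomial (Fin 3) K := LinearMap.mulLeft K F

theorem mulF_apply (F g : MvPolynomial (Fin 3) K) : mulF F g = F * g := rfl

theorem finrank_mulF {F : MvPolynomial (Fin 3) K} (hF : F ≠ 0)
    (V : Submodule K (MvPolynomial (Fin 3) K)) :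
    Module.finrank K ↥(V.map (mulF F)) = Module.finrank K V := by
  have hinj : Function.Injective (mulF F) := fun a b h => mul_left_cancel₀ hF h
  exact (LinearEquiv.finrank_eq (Submodule.equivMapOfInjective (mulF F) hinj V)).symm

theorem mulF_le {F : MvPolynomial (Fin 3) K} {a t : ℕ} (hF : F.IsHomogeneous a) :
    (homogeneousSubmodule (Fin 3) K t).map (mulF F) ≤ homogeneousSubmodule (Fin 3) K (a + t) := by
  rintro _ ⟨g, hg, rfl⟩
  exact hF.mul hg

theorem StarData.base (S : StarData s c X e) (hs : 1 ≤ s) (f : MvPolynomial (Fin 3) K)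
    (hf : f.IsHomogeneous s) : ∃ a ∈ fatIdeal (X : Set (P2 K)) 1, ∃ h,
      a.IsHomogeneous s ∧ f = a + lin e * h := by
  obtain ⟨u, rfl⟩ : ∃ u, s = 1 + u := ⟨s - 1, by omega⟩
  set G : Submodule K (MvPolynomial (Fin 3) K) := Submodule.span K (Set.range (gprod c)) with hG
  set E := (homogeneousSubmodule (Fin 3) K u).map (mulF (lin e)) with hE
  have hGle : G ≤ homogeneousSubmodule (Fin 3) K (1 + u) := by
    rw [hG, Submodule.span_le]
    rintro _ ⟨i, rfl⟩
    exact S.gprod_hom i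
  have hEle : E ≤ homogeneousSubmodule (Fin 3) K (1 + u) := mulF_le (lin_hom e)
  have hli : LinearIndependent K (gprod c) := by
    rw [Fintype.linearIndependent_iff]
    intro a ha
    exact S.indep a 0 (by rw [ha, mul_zero])
  have hGr : Module.finrank K G = 1 + u + 1 := by
    rw [hG, finrank_span_eq_card hli, S.card]
  have hEr : Module.finrank K E = (u + 2).choose 2 := by
    rw [hE, finrank_mulF (lin_ne_zero (S.e_ne hs)), aux_finrank_hom]
  have hinf : G ⊓ E = ⊥ := by
    rw [eq_bot_iff]
    rintro x ⟨hx1, ⟨h, -, hx2⟩⟩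
    obtain ⟨a, rfl⟩ := (Submodule.mem_span_range_iff_exists_fun K).mp hx1
    have := S.indep a h hx2.symm
    simp [this]
  have : FiniteDimensional K G := Submodule.finiteDimensional_of_le hGle
  have : FiniteDimensional K E := Submodule.finiteDimensional_of_le hEle
  have hsum := Submodule.finrank_sup_add_finrank_inf_eq G E
  rw [hinf, finrank_bot, hGr, hEr] at hsum
  have htop : G ⊔ E = homogeneousSubmodule (Fin 3) K (1 + u) := by
    apply Submodule.eq_of_le_of_finrank_eq (sup_le hGle hEle)
    rw [aux_finrank_hom, show 1 + u + 2 = (u + 2) + 1 by omega, Nat.choose_succ_succ' (u + 2) 1,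
      Nat.choose_one_right]
    have : (u + 2).choose (1 + 1) = (u + 2).choose 2 := rfl
    omega
  have hf' : f ∈ G ⊔ E := by rw [htop]; exact hf
  obtain ⟨a, ha, b, ⟨h, -, rfl⟩, rfl⟩ := Submodule.mem_sup.mp hf'
  refine ⟨a, ?_, h, hGle ha, rfl⟩
  have : G ≤ Submodule.restrictScalars K (fatIdeal (X : Set (P2 K)) 1) := by
    rw [hG, Submodule.span_le]
    rintro _ ⟨i, rfl⟩
    exact S.gprod_mem i
  exact this ha

theorem StarData.lift (S : StarData s c X e) (hs : 1 ≤ s) (n r : ℕ) :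
    ∀ f : MvPolynomial (Fin 3) K, f.IsHomogeneous (r + n * s) →
    ∃ a ∈ fatIdeal (X : Set (P2 K)) n, ∃ h,
      a.IsHomogeneous (r + n * s) ∧ f = a + lin e * h := by
  induction n with
  | zero =>
    intro f hf
    exact ⟨f, by simp [mem_fat], 0, hf, by simp⟩
  | succ n ih =>
    intro f hf
    have hd : r + (n + 1) * s = (r + n * s) + s := by ring
    rw [hd] at hf ⊢
    have hf2 : f ∈ homogeneousSubmodule (Fin 3) K (r + n * s) * homogeneousSubmodule (Fin 3) K s := by
      rw [← homogeneousSubmodule_one_pow (σ := Fin 3) (R := K) (n := r + n * s), ← homogeneousSubmodule_one_pow (σ := Fin 3) (R := K) (n := s), ← pow_add,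
        homogeneousSubmodule_one_pow]
      exact hf
    clear hf
    induction hf2 using Submodule.mul_induction_on' with
    | mem_mul_mem x hx y hy =>
      obtain ⟨a, ha, h, hah, rfl⟩ := ih x hx
      obtain ⟨b, hb, h', hbh, rfl⟩ := S.base hs y hy
      refine ⟨a * b, ?_, a * h' + h * b + lin e * h * h', hah.mul hbh, by ring⟩
      rw [mem_fat] at ha hb ⊢
      intro P hP
      rw [pow_succ]
      exact Ideal.mul_mem_mul (ha P hP) (by simpa using hb P hP)
    | add x hx y hy h1 h2 =>
      obtain ⟨a, ha, h, hah, rfl⟩ := h1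
      obtain ⟨b, hb, h', hbh, rfl⟩ := h2
      exact ⟨a + b, add_mem ha hb, h + h', hah.add hbh, by ring⟩

/-- graded piece of the fat ideal -/
noncomputable def piece (X : Finset (P2 K)) (n t : ℕ) : Submodule K (MvPolynomial (Fin 3) K) :=
  Submodule.restrictScalars K (fatIdeal (X : Set (P2 K)) n) ⊓ homogeneousSubmodule (Fin 3) K t

theorem mem_piece (n t : ℕ) (f : MvPolynomial (Fin 3) K) :
    f ∈ piece X n t ↔ (∀ P ∈ X, f ∈ pointIdeal P ^ n) ∧ f.IsHomogeneous t := by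
  rw [piece, Submodule.mem_inf, Submodule.restrictScalars_mem, mem_fat]
  rfl

theorem StarData.dims (S : StarData s c X e) (hs : 1 ≤ s) (n u : ℕ) (hu : n * s ≤ u + 1) :
    Module.finrank K (piece X n (u + 1)) = Module.finrank K (piece X n u) + (u + 2) := by
  set E := (homogeneousSubmodule (Fin 3) K u).map (mulF (lin e)) with hE
  have he := lin_ne_zero (S.e_ne hs)
  have hEle : E ≤ homogeneousSubmodule (Fin 3) K (u + 1) := by
    rw [add_comm u 1]; exact mulF_le (lin_hom e)
  have hple : piece X n (u + 1) ≤ homogeneousSubmodule (Fin 3) K (u + 1) := inf_le_right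
  have hEr : Module.finrank K E = (u + 2).choose 2 := by
    rw [hE, finrank_mulF he, aux_finrank_hom]
  have hsup : piece X n (u + 1) ⊔ E = homogeneousSubmodule (Fin 3) K (u + 1) := by
    apply le_antisymm (sup_le hple hEle)
    intro f hf
    obtain ⟨r, hr⟩ : ∃ r, u + 1 = r + n * s := ⟨u + 1 - n * s, by omega⟩
    obtain ⟨a, ha, h, hah, hfa⟩ := S.lift hs n r f (by rw [← hr]; exact hf)
    rw [← hr] at hah
    have hh : (lin e * h).IsHomogeneous (u + 1) := by
      have : lin e * h = f - a := by rw [hfa]; ring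
      rw [this]
      exact IsHomogeneous.sub hf hah
    have h2 := (aux_hom_quot (lin_hom e) he hh).2 (by omega)
    rw [hfa]
    exact Submodule.add_mem_sup ⟨ha, hah⟩ ⟨h, by simpa using h2, rfl⟩
  have hinf : piece X n (u + 1) ⊓ E = (piece X n u).map (mulF (lin e)) := by
    apply le_antisymm
    · rintro _ ⟨h1, ⟨h, hh, rfl⟩⟩
      refine ⟨h, ?_, rfl⟩
      have h1' := (mem_piece _ _ _).mp h1
      refine (mem_piece _ _ _).mpr ⟨?_, hh⟩
      intro P hP
      exact cancel_off P e (S.gen P hP) n h (h1'.1 P hP)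
    · rintro _ ⟨h, hh, rfl⟩
      have hh' := (mem_piece _ _ _).mp hh
      refine ⟨?_, ⟨h, hh'.2, rfl⟩⟩
      refine (mem_piece _ _ _).mpr ⟨?_, ?_⟩
      · intro P hP
        exact Ideal.mul_mem_left _ _ (hh'.1 P hP)
      · exact hEle ⟨h, hh'.2, rfl⟩
  have : FiniteDimensional K (piece X n (u + 1)) := Submodule.finiteDimensional_of_le hple
  have : FiniteDimensional K E := Submodule.finiteDimensional_of_le hEle
  have hsum := Submodule.finrank_sup_add_finrank_inf_eq (piece X n (u + 1)) E
  rw [hinf, hsup, finrank_mulF he, hEr, aux_finrank_hom, show u + 1 + 2 = (u + 2) + 1 by omega,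
    Nat.choose_succ_succ' (u + 2) 1, Nat.choose_one_right] at hsum
  have : (u + 2).choose (1 + 1) = (u + 2).choose 2 := rfl
  omega

theorem StarData.prod_dvd [Infinite K] (S : StarData s c X e) (m t : ℕ) (ht : t < m * s)
    (f : MvPolynomial (Fin 3) K) (hf : f ∈ piece X m t) : (∏ i, lin (c i)) ∣ f := by
  rw [mem_piece] at hf
  apply Finset.prod_dvd_of_isRelPrime
  · intro i _ j _ hij
    rw [Function.onFun, (lin_prime (S.ne_zero i)).irreducible.isRelPrime_iff_not_dvd]
    rintro ⟨g, hg⟩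
    obtain ⟨b, hc, -, hj⟩ := S.exQ i
    apply hj j hij.symm
    rw [← lin_eval, hg, map_mul, lin_eval, hc, zero_mul]
  · intro i _
    obtain ⟨Y, hYX, hYs, hY⟩ := S.line i
    exact bezout (S.ne_zero i) Y hY (fun P hP => S.gen P (hYX hP)) m t f
      (fun P hP => hf.1 P (hYX hP)) hf.2 (by rw [hYs]; exact ht)

theorem StarData.F_hom (S : StarData s c X e) : (∏ i, lin (c i)).IsHomogeneous (s + 1) := by
  have := IsHomogeneous.prod (Finset.univ) (fun j => lin (c j)) (fun _ => 1)
    (fun j _ => lin_hom (c j))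
  rw [Finset.sum_const, Finset.card_univ, S.card] at this
  simpa using this

theorem StarData.piece_eq [Infinite K] (S : StarData s c X e) (n t : ℕ)
    (ht : s + 1 + t < (n + 2) * s) :
    Module.finrank K (piece X (n + 2) (s + 1 + t)) = Module.finrank K (piece X n t) := by
  classical
  have hF : (∏ i, lin (c i)) ≠ 0 := Finset.prod_ne_zero_iff.mpr fun i _ => lin_ne_zero (S.ne_zero i)
  have hcount : ∀ P ∈ X, (Finset.univ.filter (fun i => c i ⬝ᵥ P.rep = 0)).card = 2 := by
    intro P hP
    obtain ⟨A, hA, hAi⟩ := S.two P hP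
    rw [← hA]
    congr 1
    ext i
    simp [hAi]
  have : piece X (n + 2) (s + 1 + t) = (piece X n t).map (mulF (∏ i, lin (c i))) := by
    apply le_antisymm
    · intro f hf
      obtain ⟨g, rfl⟩ := S.prod_dvd _ _ ht f hf
      rw [mem_piece] at hf
      refine ⟨g, (mem_piece _ _ _).mpr ⟨?_, ?_⟩, rfl⟩
      · intro P hP
        apply cancel_prod P c S.ne_zero Finset.univ n g
        rw [hcount P hP]
        exact hf.1 P hP
      · simpa using (aux_hom_quot S.F_hom hF hf.2).2 (by omega)
    · rintro _ ⟨g, hg, rfl⟩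
      have hg' := (mem_piece _ _ _).mp hg
      refine (mem_piece _ _ _).mpr ⟨?_, S.F_hom.mul hg'.2⟩
      intro P hP
      rw [mulF_apply, mul_comm, pow_add]
      refine Ideal.mul_mem_mul (hg'.1 P hP) ?_
      rw [← hcount P hP]
      exact prod_mem_pt P c _
  rw [this, finrank_mulF hF]

theorem StarData.piece_small [Infinite K] (S : StarData s c X e) (m t : ℕ)
    (ht : t < m * s) (ht2 : t < s + 1) :
    Module.finrank K (piece X m t) = 0 := by
  have hF : (∏ i, lin (c i)) ≠ 0 := Finset.prod_ne_zero_iff.mpr fun i _ => lin_ne_zero (S.ne_zero i)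
  have : piece X m t = ⊥ := by
    rw [eq_bot_iff]
    intro f hf
    obtain ⟨g, rfl⟩ := S.prod_dvd _ _ ht f hf
    rw [mem_piece] at hf
    rw [(aux_hom_quot S.F_hom hF hf.2).1 ht2, mul_zero]
    exact zero_mem _
  rw [this, finrank_bot]

theorem StarData.final [Infinite K] (S : StarData s c X e) (hs : 2 ≤ s) (n t : ℕ)
    (ht : t + 2 = (n + 2) * s) :
    Module.finrank K (piece X (n + 2) (t + 1)) + (s + 1) =
      Module.finrank K (piece X (n + 2) t) + (t + 2) := by
  have hb : (n + 2) * s = n * s + 2 * s := by ring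
  by_cases hcase : t < s + 1
  · rw [S.piece_small _ t (by omega) hcase]
    have hs2 : s = 2 := by omega
    subst hs2
    have hn : n = 0 := by omega
    subst hn
    have ht2 : t = 2 := by omega
    subst ht2
    have h1 := S.piece_eq 0 0 (by omega)
    have h2 : piece X 0 0 = homogeneousSubmodule (Fin 3) K 0 := by
      ext f
      rw [mem_piece, mem_homogeneousSubmodule]
      simp only [pow_zero, Ideal.one_eq_top, Submodule.mem_top, implies_true, true_and]
    rw [h2, aux_finrank_hom] at h1
    simp at h1 ⊢
    omega
  · obtain ⟨u, rfl⟩ : ∃ u, t = s + 1 + u := ⟨t - (s + 1), by omega⟩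
    have h1 := S.piece_eq n u (by omega)
    have h2 := S.piece_eq n (u + 1) (by omega)
    have h3 := S.dims (by omega) n u (by omega)
    rw [← add_assoc] at h2
    omega

theorem StarData.delta [Infinite K] (S : StarData s c X e) (hs : 2 ≤ s) (m : ℕ) (hm : 2 ≤ m) :
    deltaHilb (fatIdeal (X : Set (P2 K)) m) ((m : ℤ) * s - 1) = s + 1 := by
  obtain ⟨n, rfl⟩ : ∃ n, m = n + 2 := ⟨m - 2, by omega⟩
  obtain ⟨t, ht⟩ : ∃ t, t + 2 = (n + 2) * s := ⟨(n + 2) * s - 2, by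
    have : (n + 2) * s = n * s + 2 * s := by ring
    omega⟩
  have hZ : (((n + 2 : ℕ) : ℤ) * s - 1) = ((t + 1 : ℕ) : ℤ) := by
    have : ((t + 2 : ℕ) : ℤ) = ((n + 2 : ℕ) : ℤ) * s := by exact_mod_cast ht
    rw [← this]; push_cast; ring
  have hh : ∀ k : ℕ, hilbZ (fatIdeal (X : Set (P2 K)) (n + 2)) (k : ℤ) =
      ((k + 2).choose 2 : ℕ) - (Module.finrank K (piece X (n + 2) k) : ℤ) := by
    intro k
    have h1 : hilbZ (fatIdeal (X : Set (P2 K)) (n + 2)) (k : ℤ) =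
      ((hilb (fatIdeal (X : Set (P2 K)) (n + 2)) k : ℕ) : ℤ) := by
      simp [hilbZ]
    rw [h1, hilb, aux_finrank_hom]
    rw [Nat.cast_sub]
    · rfl
    · rw [← aux_finrank_hom (K := K)]
      exact Submodule.finrank_mono inf_le_right
  have hfin := S.final hs n t ht
  rw [hZ, deltaHilb, show (((t + 1 : ℕ) : ℤ) - 1) = ((t : ℕ) : ℤ) by push_cast; ring, hh, hh,
    show t + 1 + 2 = (t + 2) + 1 by omega, Nat.choose_succ_succ' (t + 2) 1, Nat.choose_one_right]
  push_cast
  have : (t + 2).choose (1 + 1) = (t + 2).choose 2 := rfl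
  rw [this]
  zify at hfin
  linarith

end coresec
section combsec

theorem comb_count {α β : Type} (A : Finset α) (B : Finset β) (inc : α → β → Prop)
    [∀ a b, Decidable (inc a b)] [DecidableEq β] (s : ℕ) (hB : B.card = s + 1)
    (hA : 2 * A.card = s * (s + 1)) (hline : ∀ b ∈ B, (A.filter (fun a => inc a b)).card = s)
    (hpair : ∀ b ∈ B, ∀ b' ∈ B, b ≠ b' → (A.filter (fun a => inc a b ∧ inc a b')).card ≤ 1) :
    (∀ a ∈ A, (B.filter (fun b => inc a b)).card = 2) ∧
    (∀ b ∈ B, ∀ b' ∈ B, b ≠ b' → ∃ a ∈ A, inc a b ∧ inc a b') := by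
  set r : α → ℕ := fun a => (B.filter (fun b => inc a b)).card with hr
  have h1 : ∑ a ∈ A, r a = (s + 1) * s := by
    have h := Finset.sum_card_bipartiteAbove_eq_sum_card_bipartiteBelow (s := A) (t := B) inc
    simp only [Finset.bipartiteAbove, Finset.bipartiteBelow] at h
    rw [hr, h, Finset.sum_congr rfl hline, Finset.sum_const, hB, smul_eq_mul]
  have h2 : ∑ a ∈ A, r a * r a =
      ∑ x ∈ B ×ˢ B, (A.filter (fun a => inc a x.1 ∧ inc a x.2)).card := by
    have h := Finset.sum_card_bipartiteAbove_eq_sum_card_bipartiteBelow (s := A) (t := B ×ˢ B)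
      (fun a x => inc a x.1 ∧ inc a x.2)
    simp only [Finset.bipartiteAbove, Finset.bipartiteBelow] at h
    rw [← h]
    apply Finset.sum_congr rfl
    intro a _
    rw [hr, ← Finset.card_product, Finset.filter_product (fun b => inc a b) (fun b => inc a b)]
  have hle : ∀ x ∈ B ×ˢ B, (A.filter (fun a => inc a x.1 ∧ inc a x.2)).card ≤
      if x.1 = x.2 then s else 1 := by
    rintro ⟨b, b'⟩ hx
    rw [Finset.mem_product] at hx
    split_ifs with h
    · simp only at h
      subst h
      simpa using (hline b hx.1).le
    · exact hpair b hx.1 b' hx.2 h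
  have h3 : ∑ x ∈ B ×ˢ B, (if x.1 = x.2 then s else 1) = (s + 1) * (2 * s) := by
    rw [Finset.sum_product]
    have : ∀ b ∈ B, ∑ b' ∈ B, (if b = b' then s else 1) = 2 * s := by
      intro b hb
      rw [← Finset.add_sum_erase _ _ hb, if_pos rfl,
        Finset.sum_congr rfl (g := fun _ => 1)
          (fun b' hb' => if_neg (Finset.ne_of_mem_erase hb').symm),
        Finset.sum_const, Finset.card_erase_of_mem hb, hB]
      simp
      omega
    rw [Finset.sum_congr rfl this, Finset.sum_const, hB, smul_eq_mul]
  have h4 : ∑ a ∈ A, r a * r a ≤ (s + 1) * (2 * s) := by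
    rw [h2, ← h3]; exact Finset.sum_le_sum hle
  have hA' : (2 : ℤ) * A.card = s * (s + 1) := by exact_mod_cast hA
  have hsum : ∑ a ∈ A, ((r a : ℤ) - 2) ^ 2 = 0 := by
    apply le_antisymm
    · have e1 : ∑ a ∈ A, ((r a : ℤ) - 2) ^ 2 =
          ((∑ a ∈ A, r a * r a : ℕ) : ℤ) - 4 * ((∑ a ∈ A, r a : ℕ) : ℤ) + 4 * A.card := by
        push_cast
        rw [Finset.mul_sum, ← Finset.sum_sub_distrib,
          show (4 : ℤ) * A.card = ∑ a ∈ A, 4 by simp [mul_comm], ← Finset.sum_add_distrib]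
        apply Finset.sum_congr rfl
        intro a _
        ring
      rw [e1, h1]
      zify at h4
      push_cast
      linarith
    · exact Finset.sum_nonneg fun a _ => sq_nonneg _
  have hr2 : ∀ a ∈ A, r a = 2 := by
    intro a ha
    have := (Finset.sum_eq_zero_iff_of_nonneg (fun a _ => sq_nonneg ((r a : ℤ) - 2))).mp hsum a ha
    have : (r a : ℤ) - 2 = 0 := by simpa using this
    omega
  refine ⟨hr2, ?_⟩
  have h5 : ∑ a ∈ A, r a * r a = (s + 1) * (2 * s) := by
    rw [Finset.sum_congr rfl (g := fun _ => 4) (fun a ha => by rw [hr2 a ha]), Finset.sum_const,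
      smul_eq_mul]
    linarith
  rw [h2, ← h3] at h5
  have h6 := (Finset.sum_eq_sum_iff_of_le hle).mp h5
  intro b hb b' hb' hne
  have := h6 (b, b') (Finset.mem_product.mpr ⟨hb, hb'⟩)
  simp only [hne, if_false] at this
  obtain ⟨a, ha⟩ := Finset.card_pos.mp (by omega : 0 < (A.filter (fun a => inc a b ∧ inc a b')).card)
  rw [Finset.mem_filter] at ha
  exact ⟨a, ha.1, ha.2⟩

end combsec

section assembly
variable {K : Type} [Field K]

theorem exists_coef (L : ProjLine K) :
    ∃ c : Fin 3 → K, c ≠ 0 ∧ ∀ v, v ∈ L.toSubmodule ↔ c ⬝ᵥ v = 0 := by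
  have hlt : L.toSubmodule < ⊤ := by
    rw [lt_top_iff_ne_top]
    intro h
    have := L.finrank_eq_two
    rw [h, finrank_top] at this
    simp at this
  obtain ⟨f, hf0, hf⟩ := Submodule.exists_le_ker_of_lt_top _ hlt
  have hfd : f = dotL (fun i => f (Pi.single i 1)) := by
    apply LinearMap.pi_ext'
    intro i
    ext
    simp [dotL_apply]
  have hc : (fun i => f (Pi.single i 1)) ≠ 0 := by
    intro h
    rw [h] at hfd
    apply hf0
    rw [hfd]
    ext
    simp [dotL_apply]
  refine ⟨_, hc, ?_⟩
  rw [hfd] at hf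
  have := Submodule.eq_of_le_of_finrank_eq hf (by rw [L.finrank_eq_two, finrank_ker_dotL hc])
  intro v
  rw [this]
  rfl

theorem mem_points (L : ProjLine K) (P : P2 K) : P ∈ L.points ↔ P.rep ∈ L.toSubmodule := by
  show P.submodule ≤ _ ↔ _
  rw [Projectivization.submodule_eq, Submodule.span_singleton_le_iff_mem]

theorem lines_meet {L L' : ProjLine K} (h : L ≠ L') {b w : Fin 3 → K} (hb0 : b ≠ 0)
    (hb : b ∈ L.toSubmodule) (hb' : b ∈ L'.toSubmodule) (hw : w ∈ L.toSubmodule)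
    (hw' : w ∈ L'.toSubmodule) : ∃ r : K, w = r • b := by
  refine dim_one L.finrank_eq_two (B := L.toSubmodule ⊓ L'.toSubmodule) inf_le_left ?_
    ⟨hb, hb'⟩ hb0 ⟨hw, hw'⟩
  intro he
  apply h
  have hle : L.toSubmodule ≤ L'.toSubmodule := inf_eq_left.mp he
  have := Submodule.eq_of_le_of_finrank_eq hle (by rw [L.finrank_eq_two, L'.finrank_eq_two])
  cases L; cases L'
  simpa using this

theorem kconfig_card {s : ℕ} {X : Set (P2 K)} {Xs : Fin s → Set (P2 K)} {Ls : Fin s → ProjLine K}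
    (hX : IsKConfig X (fun i : Fin s => i.1 + 1) Xs Ls) :
    X.Finite ∧ 2 * X.ncard = s * (s + 1) := by
  classical
  have hf : ∀ i, (Xs i).Finite := fun i =>
    Set.finite_of_ncard_pos (by rw [hX.card_eq i]; omega)
  have hU : X = ((Finset.univ.biUnion fun i => (hf i).toFinset : Finset (P2 K)) : Set (P2 K)) := by
    rw [hX.union_eq]
    ext p
    simp
  refine ⟨by rw [hU]; exact Finset.finite_toSet _, ?_⟩
  rw [hU, Set.ncard_coe_finset, Finset.card_biUnion]
  · have : ∀ i ∈ (Finset.univ : Finset (Fin s)), (hf i).toFinset.card = i.1 + 1 := by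
      intro i _
      rw [← Set.ncard_eq_toFinset_card _ (hf i), hX.card_eq i]
    rw [Finset.sum_congr rfl this, Fin.sum_univ_eq_sum_range (fun i => i + 1) s]
    clear * -
    induction s with
    | zero => simp
    | succ n ih => rw [Finset.sum_range_succ, mul_add, ih]; ring
  · intro i _ j _ hij
    rw [Function.onFun, Finset.disjoint_left]
    intro p hp hp'
    rw [Set.Finite.mem_toFinset] at hp hp'
    rcases lt_or_gt_of_ne hij with h | h
    · exact hX.not_mem j i h p hp (hX.subset_line j hp')
    · exact hX.not_mem i j h p hp' (hX.subset_line i hp)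

end assembly

/-- **Theorem (case `d_s = s`, exactly `s+1` lines).** Let `X` be a
k-configuration of type `(1,2,…,s)`, `s ≥ 2`, with exactly `s + 1` lines
containing exactly `s` points of `X`. Then `ΔH_{mX}(m·s − 1) = s + 1` for all
`m ≥ 2`. -/
theorem kconfig_delta_splusone {K : Type} [Field K] [IsAlgClosed K] {s : ℕ} (hs : 2 ≤ s)
    (X : Set (P2 K)) (Xs : Fin s → Set (P2 K)) (Ls : Fin s → ProjLine K)
    (hX : IsKConfig X (fun i : Fin s => i.1 + 1) Xs Ls)
    (hfin : {L : ProjLine K | (X ∩ L.points).ncard = s}.Finite)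
    (hcard : {L : ProjLine K | (X ∩ L.points).ncard = s}.ncard = s + 1) :
    ∀ m : ℕ, 2 ≤ m → deltaHilb (fatIdeal X m) ((m : ℤ) * s - 1) = s + 1 := by
  intro m hm
  classical
  have hinf : Infinite K := IsAlgClosed.instInfinite
  obtain ⟨hXf, hXc⟩ := kconfig_card hX
  obtain ⟨A, rfl⟩ : ∃ A : Finset (P2 K), X = (A : Set (P2 K)) := ⟨hXf.toFinset, by simp⟩
  rw [Set.ncard_coe_finset] at hXc
  set B := hfin.toFinset with hBdef
  have hB : B.card = s + 1 := by
    rw [hBdef, ← Set.ncard_eq_toFinset_card _ hfin, hcard]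
  have hlin : ∀ L ∈ B, (A.filter (fun P => P ∈ L.points)).card = s := by
    intro L hL
    rw [hBdef, Set.Finite.mem_toFinset] at hL
    have hL' : ((A : Set (P2 K)) ∩ L.points).ncard = s := hL
    rw [← hL', ← Set.ncard_coe_finset]
    congr 1
    ext P
    simp
  have hpair : ∀ L ∈ B, ∀ L' ∈ B, L ≠ L' →
      (A.filter (fun P => P ∈ L.points ∧ P ∈ L'.points)).card ≤ 1 := by
    intro L _ L' _ hne
    rw [Finset.card_le_one]
    intro P hP Q hQ
    simp only [Finset.mem_filter, mem_points] at hP hQ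
    obtain ⟨r, hr⟩ := lines_meet hne Q.rep_nonzero hQ.2.1 hQ.2.2 hP.2.1 hP.2.2
    exact P2_eq_of_smul r hr
  obtain ⟨h2, hex⟩ := comb_count A B (fun P L => P ∈ L.points) s hB hXc hlin hpair
  choose c hc0 hc using exists_coef (K := K)
  obtain ⟨f, hf⟩ := Module.exists_dual_forall_apply_ne_zero (K := K)
    (fun P : A => (P : P2 K).rep) (fun P => (P : P2 K).rep_nonzero)
  have hfd : f = dotL (fun i => f (Pi.single i 1)) := by
    apply LinearMap.pi_ext'
    intro i
    ext
    simp [dotL_apply]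
  have S : StarData (ι := B) s (fun L => c L) A (fun i => f (Pi.single i 1)) := by
    refine ⟨by simpa using hB, fun L => hc0 L, ?_, ?_, ?_, ?_⟩
    · intro P hP
      refine ⟨Finset.univ.filter (fun L : B => P ∈ (L : ProjLine K).points), ?_, ?_⟩
      · rw [← h2 P hP]
        rw [← Finset.card_map (Function.Embedding.subtype _)]
        congr 1
        ext L
        simp [and_comm]
      · intro L
        simp [mem_points, hc]
    · intro L L' hne
      obtain ⟨P, hP, hPL, hPL'⟩ := hex L L.2 L' L'.2 (fun h => hne (Subtype.ext h))
      refine ⟨P, hP, ?_⟩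
      intro b hb hb'
      rw [mem_points] at hPL hPL'
      exact lines_meet (fun h => hne (Subtype.ext h)) P.rep_nonzero hPL hPL'
        ((hc _ _).mpr hb) ((hc _ _).mpr hb')
    · intro L
      refine ⟨A.filter (fun P => P ∈ (L : ProjLine K).points), Finset.filter_subset _ _,
        hlin L L.2, ?_⟩
      intro P hP
      rw [Finset.mem_filter, mem_points, hc] at hP
      exact hP.2
    · intro P hP
      rw [← dotL_apply, ← hfd]
      exact hf ⟨P, hP⟩
  exact S.delta hs m hm
end

section
/- Let X ⊆ P² be a k-configuration of type (1,2,…,s) with s ≥ 2, and suppose there are exactly s lines in P² containing exactly s points of X. Then for every integer m ≥ 2, ΔH_{mX}(m·s − 1) = s. -/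
namespace KC
open MvPolynomial
variable {K : Type} [Field K]

/-- linear substitution -/
noncomputable def sub (A : Matrix (Fin 3) (Fin 3) K) :
    MvPolynomial (Fin 3) K →ₐ[K] MvPolynomial (Fin 3) K :=
  aeval (fun i => ∑ j, C (A i j) * X j)

lemma sub_sub (A B : Matrix (Fin 3) (Fin 3) K) (F : MvPolynomial (Fin 3) K) :
    sub A (sub B F) = sub (B * A) F := by
  have : (sub A).comp (sub B) = sub (B * A) := by
    apply MvPolynomial.algHom_ext
    intro i
    simp only [sub, AlgHom.comp_apply, aeval_X, map_sum, map_mul, algHom_C, algebraMap_eq,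
      Matrix.mul_apply, Finset.mul_sum, Finset.sum_mul]
    rw [Finset.sum_comm]
    simp only [mul_assoc]
  exact DFunLike.congr_fun this F

lemma sub_one (F : MvPolynomial (Fin 3) K) : sub 1 F = F := by
  have : sub (1 : Matrix (Fin 3) (Fin 3) K) = AlgHom.id K _ := by
    apply MvPolynomial.algHom_ext
    intro i
    simp [sub, Matrix.one_apply]
  rw [this]; rfl

lemma eval_sub (A : Matrix (Fin 3) (Fin 3) K) (v : Fin 3 → K) (F : MvPolynomial (Fin 3) K) :
    eval v (sub A F) = eval (A.mulVec v) F := by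
  have : (aeval v : MvPolynomial (Fin 3) K →ₐ[K] K).comp (sub A) = aeval (A.mulVec v) := by
    apply MvPolynomial.algHom_ext
    intro i
    simp [sub, Matrix.mulVec, dotProduct]
  have := DFunLike.congr_fun this F
  simpa [aeval_eq_eval] using this

lemma sub_hom (A : Matrix (Fin 3) (Fin 3) K) {F : MvPolynomial (Fin 3) K} {n : ℕ}
    (hF : F.IsHomogeneous n) : (sub A F).IsHomogeneous n := by
  have := hF.aeval (fun i => ∑ j, C (A i j) * X j : Fin 3 → MvPolynomial (Fin 3) K) (n := 1) (by
    intro i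
    exact IsHomogeneous.sum _ _ _ (fun j _ => isHomogeneous_C_mul_X _ _))
  rw [one_mul] at this
  exact this

lemma lin_form {f : MvPolynomial (Fin 3) K} (hf : f.IsHomogeneous 1) :
    ∃ c : Fin 3 → K, f = C (c 0) * X 0 + C (c 1) * X 1 + C (c 2) * X 2 := by
  have : f ∈ homogeneousSubmodule (Fin 3) K 1 := hf
  rw [homogeneousSubmodule_one_eq_span_X, Submodule.mem_span_range_iff_exists_fun] at this
  obtain ⟨c, hc⟩ := this
  refine ⟨c, ?_⟩
  rw [← hc, Fin.sum_univ_three]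
  simp [smul_eq_C_mul]

/-- ideal of the point `e0` -/
noncomputable def J (K : Type) [Field K] : Ideal (MvPolynomial (Fin 3) K) :=
  Ideal.span {X 1, X 2}

def wt : Fin 3 → ℕ := ![0, 1, 1]

lemma weight_wt (d : Fin 3 →₀ ℕ) : Finsupp.weight wt d = d 1 + d 2 := by
  rw [Finsupp.weight_apply, Finsupp.sum_fintype _ _ (by simp), Fin.sum_univ_three]
  simp [wt]

/-- order at `e0` -/
noncomputable def ord (F : MvPolynomial (Fin 3) K) : ℕ∞ :=
  MvPowerSeries.weightedOrder wt (F : MvPowerSeries (Fin 3) K)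

lemma le_ord_iff (F : MvPolynomial (Fin 3) K) (m : ℕ) :
    (m : ℕ∞) ≤ ord F ↔ ∀ d : Fin 3 →₀ ℕ, d 1 + d 2 < m → coeff d F = 0 := by
  constructor
  · intro h d hd
    have := MvPowerSeries.coeff_eq_zero_of_lt_weightedOrder (f := (F : MvPowerSeries (Fin 3) K))
      wt (d := d) (lt_of_lt_of_le (by rw [weight_wt]; exact_mod_cast hd) h)
    simpa using this
  · intro h
    apply MvPowerSeries.nat_le_weightedOrder
    intro d hd
    rw [weight_wt] at hd
    simpa using h d hd

lemma ord_mul (F G : MvPolynomial (Fin 3) K) : ord (F * G) = ord F + ord G := by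
  simp [ord, MvPowerSeries.weightedOrder_mul]

lemma mem_J_pow (F : MvPolynomial (Fin 3) K) (m : ℕ) :
    F ∈ J K ^ m ↔ (m : ℕ∞) ≤ ord F := by
  constructor
  · intro h
    induction m generalizing F with
    | zero => simp
    | succ m ih =>
      rw [pow_succ] at h
      refine Submodule.mul_induction_on h ?_ ?_
      · intro a ha b hb
        rw [ord_mul]
        have h1 : ((1 : ℕ) : ℕ∞) ≤ ord b := by
          rw [J, Ideal.mem_span_pair] at hb
          obtain ⟨x, y, rfl⟩ := hb
          rw [le_ord_iff]
          intro d hd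
          have h1 : d 1 = 0 := by omega
          have h2 : d 2 = 0 := by omega
          simp [coeff_mul_X', h1, h2]
        push_cast
        exact add_le_add (ih a ha) h1
      · intro x y hx hy
        rw [le_ord_iff] at *
        intro d hd
        simp [hx d hd, hy d hd]
  · intro h
    rw [le_ord_iff] at h
    rw [F.as_sum]
    refine Ideal.sum_mem _ fun d hd => ?_
    have hd' : m ≤ d 1 + d 2 := by
      by_contra hlt
      exact (mem_support_iff.1 hd) (h d (by omega))
    rw [monomial_eq, Finsupp.prod_fintype _ _ (by simp), Fin.prod_univ_three]
    have hx1 : (X 1 : MvPolynomial (Fin 3) K) ^ d 1 ∈ J K ^ d 1 :=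
      Ideal.pow_mem_pow (Ideal.subset_span (by simp)) _
    have hx2 : (X 2 : MvPolynomial (Fin 3) K) ^ d 2 ∈ J K ^ d 2 :=
      Ideal.pow_mem_pow (Ideal.subset_span (by simp)) _
    have := Ideal.pow_le_pow_right hd' (pow_add (J K) _ _ ▸ Ideal.mul_mem_mul hx1 hx2)
    rw [mul_assoc (X 0 ^ d 0)]
    exact Ideal.mul_mem_left _ _ (Ideal.mul_mem_left _ _ this)

/-- coordinates adapted to a point -/
lemma exists_coord (p : P2 K) : ∃ A B : Matrix (Fin 3) (Fin 3) K, A * B = 1 ∧ B * A = 1 ∧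
    B.mulVec p.rep = Pi.single 0 1 := by
  obtain ⟨b, hb⟩ : ∃ b : Module.Basis (Fin 3) K (Fin 3 → K), b 0 = p.rep := by
    have hli : LinearIndepOn K id ({p.rep} : Set (Fin 3 → K)) :=
      (linearIndepOn_singleton_iff K).2 p.rep_nonzero
    let b0 := Module.Basis.extend hli
    have : Fintype (hli.extend (Set.subset_univ _)) := FiniteDimensional.fintypeBasisIndex b0
    have hc : Fintype.card (hli.extend (Set.subset_univ _)) = 3 := by
      rw [← Module.finrank_eq_card_basis b0]; simp
    let e0 := Fintype.equivFinOfCardEq hc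
    let x : hli.extend (Set.subset_univ _) :=
      ⟨p.rep, hli.subset_extend _ (by simp)⟩
    let e := e0.trans (Equiv.swap (e0 x) 0)
    refine ⟨b0.reindex e, ?_⟩
    have : e.symm 0 = x := by rw [Equiv.symm_apply_eq]; simp [e]
    rw [Module.Basis.reindex_apply, this]
    simp [b0, x]
  refine ⟨(Pi.basisFun K (Fin 3)).toMatrix b, b.toMatrix (Pi.basisFun K (Fin 3)), by simp,
    by simp, ?_⟩
  rw [← hb]
  ext i
  have := congrFun ((Pi.basisFun K (Fin 3)).toMatrix_mulVec_repr b (b 0)) i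
  rw [Module.Basis.repr_self, Finsupp.single_eq_pi_single] at this
  rw [← this]
  rfl

lemma mem_pointIdeal_pow (p : P2 K) {A B : Matrix (Fin 3) (Fin 3) K} (hAB : A * B = 1)
    (hBA : B * A = 1) (hB : B.mulVec p.rep = Pi.single 0 1) (m : ℕ) (F : MvPolynomial (Fin 3) K) :
    F ∈ pointIdeal p ^ m ↔ (m : ℕ∞) ≤ ord (sub A F) := by
  rw [← mem_J_pow]
  have hA : A.mulVec (Pi.single 0 1) = p.rep := by
    rw [← hB, Matrix.mulVec_mulVec, hAB, Matrix.one_mulVec]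
  have h1 : (pointIdeal p).map (sub A) ≤ J K := by
    rw [pointIdeal, Ideal.map_span, Ideal.span_le]
    rintro _ ⟨f, ⟨hf, hf0⟩, rfl⟩
    obtain ⟨c, hc⟩ := lin_form (sub_hom A hf)
    have h0 : eval (Pi.single 0 1) (sub A f) = 0 := by rw [eval_sub, hA, hf0]
    rw [hc] at h0
    simp at h0
    rw [SetLike.mem_coe, hc, h0]
    simp only [map_zero, zero_mul, zero_add]
    exact Ideal.mem_span_pair.2 ⟨_, _, rfl⟩
  have h2 : (J K).map (sub B) ≤ pointIdeal p := by
    rw [J, Ideal.map_span, Ideal.span_le]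
    rintro _ ⟨f, hf, rfl⟩
    apply Ideal.subset_span
    rcases hf with rfl | rfl
    · exact ⟨sub_hom B (isHomogeneous_X _ _), by rw [eval_sub, hB]; simp⟩
    · exact ⟨sub_hom B (isHomogeneous_X _ _), by rw [eval_sub, hB]; simp⟩
  constructor
  · intro h
    have := Ideal.mem_map_of_mem (sub A) h
    rw [Ideal.map_pow] at this
    exact Ideal.pow_right_mono h1 _ this
  · intro h
    have := Ideal.mem_map_of_mem (sub B) h
    rw [Ideal.map_pow, sub_sub, hAB, sub_one] at this
    exact Ideal.pow_right_mono h2 _ this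

lemma ord_lin {l : MvPolynomial (Fin 3) K} (hl : l.IsHomogeneous 1) (h0 : l ≠ 0) : ord l ≤ 1 := by
  obtain ⟨d, hd⟩ := ne_zero_iff.1 h0
  have : d.degree = 1 := by
    by_contra h; exact hd (hl.coeff_eq_zero h)
  by_contra h
  have h2 : ((2 : ℕ) : ℕ∞) ≤ ord l := by
    have := Order.add_one_le_of_lt (not_le.1 h)
    exact_mod_cast this
  rw [le_ord_iff] at h2
  refine hd (h2 d ?_)
  rw [Finsupp.degree_eq_sum, Fin.sum_univ_three] at this
  omega

lemma cancel_in (p : P2 K) {l G : MvPolynomial (Fin 3) K} (hl : l.IsHomogeneous 1) (h0 : l ≠ 0)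
    {m : ℕ} (h : l * G ∈ pointIdeal p ^ m) : G ∈ pointIdeal p ^ (m - 1) := by
  obtain ⟨A, B, hAB, hBA, hB⟩ := exists_coord p
  rw [mem_pointIdeal_pow p hAB hBA hB] at *
  rw [map_mul, ord_mul] at h
  have hne : sub A l ≠ 0 := by
    intro h
    apply h0
    rw [← sub_one l, ← hAB, ← sub_sub, h, map_zero]
  have := ord_lin (sub_hom A hl) hne
  have h3 : (m : ℕ∞) ≤ ord (sub A G) + 1 := by
    refine h.trans ?_
    rw [add_comm]; gcongr
  push_cast
  exact tsub_le_iff_right.2 h3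

lemma cancel_out (p : P2 K) {l G : MvPolynomial (Fin 3) K} (h0 : eval p.rep l ≠ 0)
    {m : ℕ} (h : l * G ∈ pointIdeal p ^ m) : G ∈ pointIdeal p ^ m := by
  obtain ⟨A, B, hAB, hBA, hB⟩ := exists_coord p
  rw [mem_pointIdeal_pow p hAB hBA hB] at *
  rw [map_mul, ord_mul] at h
  have : ord (sub A l) = 0 := by
    by_contra hne
    have h1 : ((1 : ℕ) : ℕ∞) ≤ ord (sub A l) := by
      exact_mod_cast Order.one_le_iff_pos.2 (pos_iff_ne_zero.2 hne)
    rw [← mem_pointIdeal_pow p hAB hBA hB, pow_one] at h1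
    have h2 : pointIdeal p ≤ RingHom.ker (eval p.rep) := by
      rw [pointIdeal, Ideal.span_le]
      rintro f ⟨_, hf⟩
      exact hf
    exact h0 (h2 h1)
  simpa [this] using h

end KC

namespace KC
open MvPolynomial
variable {K : Type} [Field K]

noncomputable def ZI (S : Finset (P2 K)) (μ : P2 K → ℕ) : Ideal (MvPolynomial (Fin 3) K) :=
  ⨅ p ∈ S, pointIdeal p ^ μ p

noncomputable def Dsub (S : Finset (P2 K)) (μ : P2 K → ℕ) (t : ℕ) :
    Submodule K (MvPolynomial (Fin 3) K) :=
  Submodule.restrictScalars K (ZI S μ : Submodule (MvPolynomial (Fin 3) K) (MvPolynomial (Fin 3) K))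
    ⊓ homogeneousSubmodule (Fin 3) K t

noncomputable def D (S : Finset (P2 K)) (μ : P2 K → ℕ) (t : ℕ) : ℕ :=
  Module.finrank K (Dsub S μ t)

lemma mem_Dsub {S : Finset (P2 K)} {μ : P2 K → ℕ} {t : ℕ} {F : MvPolynomial (Fin 3) K} :
    F ∈ Dsub S μ t ↔ (∀ p ∈ S, F ∈ pointIdeal p ^ μ p) ∧ F.IsHomogeneous t := by
  simp [Dsub, ZI, Submodule.mem_inf]

instance hsFin (t : ℕ) : Module.Finite K (homogeneousSubmodule (Fin 3) K t) :=
  Module.Finite.iff_fg.2 (homogeneousSubmodule_fg _ _ t)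

lemma Dsub_le (S : Finset (P2 K)) (μ : P2 K → ℕ) (t : ℕ) :
    Dsub S μ t ≤ homogeneousSubmodule (Fin 3) K t := inf_le_right

instance DFin (S : Finset (P2 K)) (μ : P2 K → ℕ) (t : ℕ) : Module.Finite K (Dsub S μ t) :=
  Submodule.finiteDimensional_of_le (Dsub_le S μ t)

lemma finrank_hs (t : ℕ) :
    Module.finrank K (homogeneousSubmodule (Fin 3) K t) = (t + 2).choose 2 := by
  have : {d : Fin 3 →₀ ℕ | d.degree = t} = ((Finset.univ : Finset (Fin 3)).finsuppAntidiag t : Set _) := by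
    ext d
    simp [Finset.mem_finsuppAntidiag, Finsupp.degree_eq_sum]
  rw [homogeneousSubmodule_eq_finsupp_supported, this]
  rw [(AddMonoidAlgebra.supportedEquivFinsupp _).finrank_eq]
  rw [Module.finrank_finsupp_self]
  simp only [Finset.coe_sort_coe, Fintype.card_coe, Finset.card_finsuppAntidiag_nat_eq_choose]
  rw [Finset.card_univ, Fintype.card_fin, show 3 + t - 1 = t + 2 by omega,
    Nat.choose_symm_add]

lemma D_le (S : Finset (P2 K)) (μ : P2 K → ℕ) (t : ℕ) : D S μ t ≤ (t + 2).choose 2 := by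
  rw [← finrank_hs (K := K) t]
  exact Submodule.finrank_mono (Dsub_le S μ t)

/-- degree of a fat point scheme -/
def dg (S : Finset (P2 K)) (μ : P2 K → ℕ) : ℕ := ∑ p ∈ S, (μ p + 1).choose 2

lemma finrank_hs_inf (p : P2 K) (W : Submodule K (MvPolynomial (Fin 3) K))
    (t m : ℕ) (hW : W ≤ homogeneousSubmodule (Fin 3) K t) :
    Module.finrank K W ≤ Module.finrank K (W ⊓ Submodule.restrictScalars K
      (pointIdeal p ^ m : Submodule (MvPolynomial (Fin 3) K) (MvPolynomial (Fin 3) K)) :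
        Submodule K (MvPolynomial (Fin 3) K)) + (m + 1).choose 2 := by
  obtain ⟨A, B, hAB, hBA, hB⟩ := exists_coord p
  have : Module.Finite K W := Submodule.finiteDimensional_of_le hW
  let f : W →ₗ[K] ((Finset.range m).sigma (fun j => Finset.range (j + 1)) → K) :=
    { toFun := fun F x => coeff (Finsupp.equivFunOnFinite.symm
        ![t - x.1.1, x.1.2, x.1.1 - x.1.2]) (sub A F.1)
      map_add' := by intros; ext; simp
      map_smul' := by intros; ext; simp }
  have h1 := LinearMap.finrank_range_add_finrank_ker f
  have h2 : Module.finrank K (LinearMap.range f) ≤ (m + 1).choose 2 := by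
    refine (Submodule.finrank_le _).trans ?_
    rw [Module.finrank_fintype_fun_eq_card, Fintype.card_coe, Finset.card_sigma]
    simp only [Finset.card_range]
    apply le_of_eq
    clear * -
    induction m with
    | zero => simp
    | succ m ih =>
      rw [Finset.sum_range_succ, ih, Nat.choose_succ_succ' (m + 1) 1]
      simp [add_comm]
  have h3 : Module.finrank K (LinearMap.ker f) ≤ Module.finrank K (W ⊓ Submodule.restrictScalars K
      (pointIdeal p ^ m : Submodule (MvPolynomial (Fin 3) K) (MvPolynomial (Fin 3) K)) :
        Submodule K (MvPolynomial (Fin 3) K)) := by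
    rw [(Submodule.equivMapOfInjective W.subtype W.injective_subtype (LinearMap.ker f)).finrank_eq]
    apply Submodule.finrank_mono
    rintro _ ⟨F, hF, rfl⟩
    refine ⟨F.2, ?_⟩
    change F.1 ∈ pointIdeal p ^ m
    rw [mem_pointIdeal_pow p hAB hBA hB, le_ord_iff]
    intro d hd
    by_cases hdt : d.degree = t
    · have := congrFun (LinearMap.mem_ker.1 hF) ⟨⟨d 1 + d 2, d 1⟩, by
        simp only [Finset.mem_sigma, Finset.mem_range]; omega⟩
      simp only [f, LinearMap.coe_mk, AddHom.coe_mk, Pi.zero_apply] at this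
      rw [← this]
      congr 1
      rw [Finsupp.degree_eq_sum, Fin.sum_univ_three] at hdt
      ext i
      fin_cases i
      · simp; omega
      · simp
      · simp
    · exact (sub_hom A (hW F.2)).coeff_eq_zero hdt
  omega

lemma D_ge (S : Finset (P2 K)) (μ : P2 K → ℕ) (t : ℕ) :
    (t + 2).choose 2 ≤ D S μ t + dg S μ := by
  classical
  induction S using Finset.induction_on with
  | empty =>
    rw [← finrank_hs (K := K) t]
    refine le_trans (Submodule.finrank_mono ?_) (Nat.le_add_right _ _)
    intro F hF
    exact mem_Dsub.2 ⟨by simp, hF⟩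
  | insert p S hp ih =>
    have h1 := finrank_hs_inf p (Dsub S μ t) t (μ p) (Dsub_le _ _ _)
    have h2 : Dsub S μ t ⊓ Submodule.restrictScalars K
      (pointIdeal p ^ μ p : Submodule (MvPolynomial (Fin 3) K) (MvPolynomial (Fin 3) K)) =
      Dsub (insert p S) μ t := by
      ext F
      rw [Submodule.mem_inf, mem_Dsub, mem_Dsub, Submodule.restrictScalars_mem,
        Finset.forall_mem_insert]
      tauto
    rw [h2] at h1
    rw [dg, Finset.sum_insert hp]
    simp only [D, dg] at *
    omega

end KC

namespace KC
open MvPolynomial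
variable {K : Type} [Field K]

lemma mem_points (L : ProjLine K) (p : P2 K) : p ∈ L.points ↔ p.rep ∈ L.toSubmodule := by
  change p.submodule ≤ _ ↔ _
  rw [Projectivization.submodule_eq, Submodule.span_singleton_le_iff_mem]

/-- A vector of `L` avoiding finitely many points. -/
lemma exists_avoid [Infinite K] (L : ProjLine K) (S : Finset (P2 K)) :
    ∃ v ∈ L.toSubmodule, v ≠ 0 ∧ ∀ p ∈ S, ∀ c : K, p.rep ≠ c • v := by
  classical
  let N : Finset (Subspace K L.toSubmodule) :=
    S.image (fun p => p.submodule.comap L.toSubmodule.subtype)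
  have hN : ⊤ ∉ insert ⊥ N := by
    intro h
    have key : ∃ W : Submodule K (Fin 3 → K), Module.finrank K W ≤ 1 ∧ L.toSubmodule ≤ W := by
      rcases Finset.mem_insert.1 h with h | h
      · refine ⟨⊥, by simp, ?_⟩
        intro x hx
        have : (⟨x, hx⟩ : L.toSubmodule) ∈ (⊤ : Submodule K L.toSubmodule) := trivial
        rw [h] at this
        simpa using this
      · obtain ⟨p, hp, hpt⟩ := Finset.mem_image.1 h
        refine ⟨p.submodule, p.finrank_submodule.le, ?_⟩
        intro x hx
        have : (⟨x, hx⟩ : L.toSubmodule) ∈ (⊤ : Submodule K L.toSubmodule) := trivial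
        rw [← hpt] at this
        simpa using this
    obtain ⟨W, h1, h2⟩ := key
    have := Submodule.finrank_mono h2
    rw [L.finrank_eq_two] at this
    omega
  have := Subspace.biUnion_ne_univ_of_top_notMem hN
  obtain ⟨v, hv⟩ := (Set.ne_univ_iff_exists_notMem _).1 this
  simp only [Set.mem_iUnion, not_exists] at hv
  refine ⟨v.1, v.2, ?_, ?_⟩
  · intro h0
    exact hv ⊥ (by simp) (by simpa using h0)
  · intro p hp c hc
    refine hv (p.submodule.comap L.toSubmodule.subtype)
      (Finset.mem_insert_of_mem (Finset.mem_image_of_mem _ hp)) ?_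
    have hc0 : c ≠ 0 := by
      rintro rfl
      exact p.rep_nonzero (by simpa using hc)
    change v.1 ∈ p.submodule
    rw [Projectivization.submodule_eq, Submodule.mem_span_singleton]
    exact ⟨c⁻¹, by rw [hc, smul_smul, inv_mul_cancel₀ hc0, one_smul]⟩

lemma exists_line_coord [Infinite K] (L : ProjLine K) (S : Finset (P2 K)) :
    ∃ A B : Matrix (Fin 3) (Fin 3) K, A * B = 1 ∧ B * A = 1 ∧
      (∀ r, r ∈ L.toSubmodule ↔ B.mulVec r 2 = 0) ∧
      (∀ p ∈ S, p ∈ L.points → B.mulVec p.rep 0 ≠ 0) := by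
  obtain ⟨v, hvL, hv0, hv⟩ := exists_avoid L S
  obtain ⟨u, huL, hu⟩ : ∃ u ∈ L.toSubmodule, u ∉ Submodule.span K {v} := by
    by_contra! h
    have := Submodule.finrank_mono (show L.toSubmodule ≤ Submodule.span K {v} from h)
    rw [L.finrank_eq_two, finrank_span_singleton hv0] at this
    omega
  obtain ⟨w, hw⟩ : ∃ w, w ∉ L.toSubmodule := by
    by_contra! h
    have h2 := L.finrank_eq_two
    rw [(Submodule.eq_top_iff'.2 h), finrank_top] at h2
    simp at h2
  let A : Matrix (Fin 3) (Fin 3) K := Matrix.of (fun i j => (![u, v, w] j) i)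
  have hA : ∀ x : Fin 3 → K, A.mulVec x = x 0 • u + x 1 • v + x 2 • w := by
    intro x
    ext i
    simp [A, Matrix.mulVec, dotProduct, Fin.sum_univ_three]
    ring
  have hAL : ∀ x : Fin 3 → K, A.mulVec x ∈ L.toSubmodule ↔ x 2 = 0 := by
    intro x
    have hm : x 0 • u + x 1 • v ∈ L.toSubmodule :=
      add_mem (Submodule.smul_mem _ _ huL) (Submodule.smul_mem _ _ hvL)
    rw [hA, Submodule.add_mem_iff_right _ hm]
    constructor
    · intro h
      by_contra hx
      exact hw ((Submodule.smul_mem_iff _ hx).1 h)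
    · intro h; simp [h]
  have hU : IsUnit A := by
    rw [← Matrix.mulVec_injective_iff_isUnit]
    change Function.Injective (Matrix.mulVecLin A)
    rw [injective_iff_map_eq_zero]
    intro x hx
    change A.mulVec x = 0 at hx
    have h2 : x 2 = 0 := (hAL x).1 (by rw [hx]; exact zero_mem _)
    rw [hA, h2, zero_smul, add_zero] at hx
    have h0 : x 0 = 0 := by
      by_contra hne
      apply hu
      rw [Submodule.mem_span_singleton]
      refine ⟨-(x 0)⁻¹ * x 1, ?_⟩
      have : x 1 • v = - (x 0 • u) := by rw [eq_neg_iff_add_eq_zero, add_comm, hx]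
      rw [mul_smul, this, smul_neg, neg_smul, neg_neg, smul_smul, inv_mul_cancel₀ hne, one_smul]
    rw [h0, zero_smul, zero_add] at hx
    have h1 : x 1 = 0 := (smul_eq_zero.1 hx).resolve_right hv0
    ext i
    fin_cases i <;> simp [h0, h1, h2]
  have hdet := (Matrix.isUnit_iff_isUnit_det A).1 hU
  have hinv : ∀ r, A.mulVec (A⁻¹.mulVec r) = r := by
    intro r
    rw [Matrix.mulVec_mulVec, Matrix.mul_nonsing_inv A hdet, Matrix.one_mulVec]
  refine ⟨A, A⁻¹, Matrix.mul_nonsing_inv A hdet, Matrix.nonsing_inv_mul A hdet, ?_, ?_⟩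
  · intro r
    rw [← hAL, hinv]
  · intro p hp hpL h0
    rw [mem_points] at hpL
    have h2 : A⁻¹.mulVec p.rep 2 = 0 := by rw [← hAL, hinv]; exact hpL
    have := hinv p.rep
    rw [hA, h0, h2, zero_smul, zero_smul, zero_add, add_zero] at this
    exact hv p hp _ this.symm

noncomputable def res (L : ProjLine K) (μ : P2 K → ℕ) : P2 K → ℕ := by
  classical exact fun p => if p ∈ L.points then μ p - 1 else μ p

noncomputable def ldeg (S : Finset (P2 K)) (L : ProjLine K) (μ : P2 K → ℕ) : ℕ := by
  classical exact ∑ p ∈ S with p ∈ L.points, μ p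

lemma dg_res (S : Finset (P2 K)) (L : ProjLine K) (μ : P2 K → ℕ) :
    dg S μ = dg S (res L μ) + ldeg S L μ := by
  classical
  simp only [dg, ldeg, Finset.sum_filter, ← Finset.sum_add_distrib]
  refine Finset.sum_congr rfl fun p _ => ?_
  by_cases h : p ∈ L.points
  · simp only [res, h, if_true]
    rcases μ p with _ | n
    · simp
    · rw [Nat.choose_succ_succ' (n + 1) 1]
      simp [add_comm]
  · simp [res, h]

/-- restriction to the line `(1 : T : 0)` in the coordinates `A` -/
noncomputable def rho (A : Matrix (Fin 3) (Fin 3) K) : MvPolynomial (Fin 3) K →ₐ[K] Polynomial K :=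
  (aeval ![1, Polynomial.X, 0]).comp (sub A)

lemma rho_dvd {A B : Matrix (Fin 3) (Fin 3) K} (hAB : A * B = 1) (p : P2 K)
    (h2 : B.mulVec p.rep 2 = 0) (h0 : B.mulVec p.rep 0 ≠ 0) (m : ℕ) {F : MvPolynomial (Fin 3) K}
    (hF : F ∈ pointIdeal p ^ m) :
    (Polynomial.X - Polynomial.C (B.mulVec p.rep 1 / B.mulVec p.rep 0)) ^ m ∣ rho A F := by
  have h1 : (pointIdeal p).map (rho A) ≤
      Ideal.span {Polynomial.X - Polynomial.C (B.mulVec p.rep 1 / B.mulVec p.rep 0)} := by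
    rw [pointIdeal, Ideal.map_span, Ideal.span_le]
    rintro _ ⟨f, ⟨hf, hf0⟩, rfl⟩
    obtain ⟨c, hc⟩ := lin_form (sub_hom A hf)
    have h3 : eval (B.mulVec p.rep) (sub A f) = 0 := by
      rw [eval_sub, Matrix.mulVec_mulVec, hAB, Matrix.one_mulVec, hf0]
    rw [hc] at h3
    simp [h2] at h3
    rw [SetLike.mem_coe, Ideal.mem_span_singleton]
    refine ⟨Polynomial.C (c 1), ?_⟩
    have : c 0 = - (c 1 * (B.mulVec p.rep 1 / B.mulVec p.rep 0)) := by
      field_simp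
      linear_combination h3
    simp only [rho, AlgHom.comp_apply, hc]
    simp [this]
    ring
  have := Ideal.mem_map_of_mem (rho A) hF
  rw [Ideal.map_pow] at this
  have := Ideal.pow_right_mono h1 _ this
  rwa [Ideal.span_singleton_pow, Ideal.mem_span_singleton] at this

lemma rho_deg (A : Matrix (Fin 3) (Fin 3) K) {t : ℕ} {F : MvPolynomial (Fin 3) K}
    (hF : F.IsHomogeneous t) : (rho A F).degree < (t + 1 : ℕ) := by
  have hG := sub_hom A hF
  simp only [rho, AlgHom.comp_apply]
  rw [aeval_def, eval₂_eq', ← Polynomial.mem_degreeLT]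
  refine Submodule.sum_mem _ fun d hd => ?_
  rw [Polynomial.mem_degreeLT, Fin.prod_univ_three]
  have hdd : d.degree = t := by
    by_contra h; exact (mem_support_iff.1 hd) (hG.coeff_eq_zero h)
  rw [Finsupp.degree_eq_sum, Fin.sum_univ_three] at hdd
  rcases Nat.eq_zero_or_pos (d 2) with h | h
  · have he : (algebraMap K (Polynomial K)) (coeff d (sub A F)) *
        ((![1, Polynomial.X, 0] : Fin 3 → Polynomial K) 0 ^ d 0 *
          (![1, Polynomial.X, 0] : Fin 3 → Polynomial K) 1 ^ d 1 *
          (![1, Polynomial.X, 0] : Fin 3 → Polynomial K) 2 ^ d 2) =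
        Polynomial.C (coeff d (sub A F)) * Polynomial.X ^ d 1 := by simp [h]
    rw [he]
    refine lt_of_le_of_lt (Polynomial.degree_C_mul_X_pow_le _ _) ?_
    exact_mod_cast (by omega)
  · simp [h.ne']

lemma rho_ker {A : Matrix (Fin 3) (Fin 3) K} {t : ℕ} {F : MvPolynomial (Fin 3) K}
    (hF : F.IsHomogeneous t) (h0 : rho A F = 0) : X 2 ∣ sub A F := by
  have hG := sub_hom A hF
  simp only [rho, AlgHom.comp_apply] at h0
  rw [← Ideal.mem_span_singleton, ← Set.image_singleton, mem_ideal_span_X_image]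
  intro d hd
  refine ⟨2, rfl, fun hd2 => (mem_support_iff.1 hd) ?_⟩
  rw [aeval_def, eval₂_eq'] at h0
  have h1 := congrArg (fun q => Polynomial.coeff q (d 1)) h0
  simp only [Polynomial.finsetSum_coeff, Polynomial.coeff_zero] at h1
  rw [Finset.sum_eq_single d] at h1
  · simpa [Fin.prod_univ_three, hd2] using h1
  · intro e he hne
    rw [Fin.prod_univ_three]
    rcases Nat.eq_zero_or_pos (e 2) with h | h
    · have hdd : d.degree = t := by
        by_contra h; exact (mem_support_iff.1 hd) (hG.coeff_eq_zero h)
      have hee : e.degree = t := by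
        by_contra h; exact (mem_support_iff.1 he) (hG.coeff_eq_zero h)
      rw [Finsupp.degree_eq_sum, Fin.sum_univ_three] at hdd hee
      have : d 1 ≠ e 1 := by
        intro h1
        apply hne
        ext i
        fin_cases i <;> simp <;> omega
      simp [h, Polynomial.coeff_X_pow, this]
    · simp [h.ne']
  · intro h; exact absurd hd h

/-- The key inequality: restriction to a line. -/
lemma D_peel [Infinite K] (S : Finset (P2 K)) (μ : P2 K → ℕ) (L : ProjLine K) (t : ℕ) :
    D S μ (t + 1) ≤ D S (res L μ) t + (t + 2 - ldeg S L μ) := by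
  classical
  obtain ⟨A, B, hAB, hBA, hL, hS⟩ := exists_line_coord L S
  let f : Dsub S μ (t + 1) →ₗ[K] Polynomial K := (rho A).toLinearMap ∘ₗ (Dsub S μ (t + 1)).subtype
  have h1 := LinearMap.finrank_range_add_finrank_ker f
  have hker : Module.finrank K (LinearMap.ker f) ≤ D S (res L μ) t := by
    rw [(Submodule.equivMapOfInjective _ (Dsub S μ (t + 1)).injective_subtype
      (LinearMap.ker f)).finrank_eq]
    refine le_trans (Submodule.finrank_mono (t := (Dsub S (res L μ) t).map
      (LinearMap.mulLeft K (sub B (X 2)))) ?_) (Submodule.finrank_map_le _ _)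
    rintro _ ⟨F, hF, rfl⟩
    obtain ⟨hF1, hF2⟩ := mem_Dsub.1 F.2
    obtain ⟨G, hG⟩ := rho_ker hF2 (LinearMap.mem_ker.1 hF)
    have hlh : (sub B (X 2)).IsHomogeneous 1 := sub_hom B (isHomogeneous_X K 2)
    have hl0 : sub B (X 2) ≠ 0 := by
      intro h
      have := congrArg (sub A) h
      rw [sub_sub, hBA, sub_one, map_zero] at this
      exact X_ne_zero _ this
    have hFG : F.1 = sub B (X 2) * sub B G := by
      rw [← map_mul, ← hG, sub_sub, hAB, sub_one]
    have hGh : G.IsHomogeneous t := by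
      intro d hd
      have h2 := sub_hom A hF2
      rw [hG] at h2
      have h3 := h2 (d := Finsupp.single 2 1 + d) (by rwa [coeff_X_mul])
      rw [map_add, Finsupp.weight_single] at h3
      simp at h3
      omega
    refine ⟨sub B G, mem_Dsub.2 ⟨?_, sub_hom B hGh⟩, hFG.symm⟩
    intro p hp
    have := hF1 p hp
    rw [hFG] at this
    by_cases hpL : p ∈ L.points
    · simp only [res, hpL, if_true]
      exact cancel_in p hlh hl0 this
    · simp only [res, hpL, if_false]
      refine cancel_out p ?_ this
      rw [mem_points, hL] at hpL
      rwa [eval_sub, eval_X]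
  have hrange : Module.finrank K (LinearMap.range f) ≤ t + 2 - ldeg S L μ := by
    let c : P2 K → K := fun p => B.mulVec p.rep 1 / B.mulVec p.rep 0
    let PP : Polynomial K := ∏ p ∈ S with p ∈ L.points, (Polynomial.X - Polynomial.C (c p)) ^ μ p
    have hPm : PP.Monic := Polynomial.monic_prod_of_monic _ _
      (fun p _ => (Polynomial.monic_X_sub_C _).pow _)
    have hP : PP.natDegree = ldeg S L μ := by
      simp only [PP, ldeg]
      rw [Polynomial.natDegree_prod_of_monic _ _ (fun p _ => (Polynomial.monic_X_sub_C _).pow _)]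
      simp
    have hle : LinearMap.range f ≤ (Polynomial.degreeLT K (t + 2 - ldeg S L μ)).map
        (LinearMap.mulLeft K PP) := by
      rintro _ ⟨F, rfl⟩
      obtain ⟨hF1, hF2⟩ := mem_Dsub.1 F.2
      have hdvd : PP ∣ rho A F.1 := by
        refine Finset.prod_dvd_of_coprime ?_ ?_
        · intro p hp q hq hpq
          apply IsCoprime.pow
          apply Polynomial.isCoprime_X_sub_C_of_isUnit_sub
          rw [isUnit_iff_ne_zero, sub_ne_zero]
          intro hc
          apply hpq
          simp only [Finset.coe_filter, Set.mem_setOf_eq] at hp hq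
          have hp0 := hS p hp.1 hp.2
          have hq0 := hS q hq.1 hq.2
          have hp2 := (hL _).1 ((mem_points _ _).1 hp.2)
          have hq2 := (hL _).1 ((mem_points _ _).1 hq.2)
          rw [← p.mk_rep, ← q.mk_rep, Projectivization.mk_eq_mk_iff']
          refine ⟨B.mulVec p.rep 0 / B.mulVec q.rep 0, ?_⟩
          have hB : (B.mulVec p.rep 0 / B.mulVec q.rep 0) • B.mulVec q.rep = B.mulVec p.rep := by
            simp only [c] at hc
            ext i
            fin_cases i
            · simp; field_simp
            · simp; field_simp at hc ⊢; linear_combination -hc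
            · simp [hp2, hq2]
          have := congrArg A.mulVec hB
          rwa [Matrix.mulVec_smul, Matrix.mulVec_mulVec, Matrix.mulVec_mulVec, hAB,
            Matrix.one_mulVec, Matrix.one_mulVec] at this
        · intro p hp
          rw [Finset.mem_filter] at hp
          exact rho_dvd hAB p ((hL _).1 ((mem_points _ _).1 hp.2)) (hS p hp.1 hp.2) _ (hF1 p hp.1)
      obtain ⟨h, hh⟩ := hdvd
      refine ⟨h, ?_, hh.symm⟩
      rw [SetLike.mem_coe, Polynomial.mem_degreeLT]
      have hd := rho_deg A hF2
      by_cases hz : h = 0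
      · rw [hz, Polynomial.degree_zero]; exact WithBot.bot_lt_coe _
      rw [hh, mul_comm, hPm.degree_mul, Polynomial.degree_eq_natDegree hz,
        Polynomial.degree_eq_natDegree hPm.ne_zero, hP] at hd
      rw [Polynomial.degree_eq_natDegree hz]
      norm_cast at hd ⊢
      omega
    refine (Submodule.finrank_mono hle).trans ((Submodule.finrank_map_le _ _).trans ?_)
    rw [(Polynomial.degreeLTEquiv K _).finrank_eq]
    simp
  simp only [D] at *
  omega

lemma D_mul [Infinite K] (S : Finset (P2 K)) (μ : P2 K → ℕ) (L : ProjLine K) (t : ℕ) :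
    D S (res L μ) t ≤ D S μ (t + 1) := by
  classical
  obtain ⟨A, B, hAB, hBA, hL, hS⟩ := exists_line_coord L S
  have hlh : (sub B (X 2)).IsHomogeneous 1 := sub_hom B (isHomogeneous_X K 2)
  have hl0 : sub B (X 2) ≠ 0 := by
    intro h
    have := congrArg (sub A) h
    rw [sub_sub, hBA, sub_one, map_zero] at this
    exact X_ne_zero _ this
  have hinj : Function.Injective (LinearMap.mulLeft K (sub B (X 2))) :=
    fun x y h => mul_left_cancel₀ hl0 h
  rw [D, (Submodule.equivMapOfInjective _ hinj _).finrank_eq]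
  apply Submodule.finrank_mono
  rintro _ ⟨G, hG, rfl⟩
  obtain ⟨h1, h2⟩ := mem_Dsub.1 hG
  refine mem_Dsub.2 ⟨?_, ?_⟩
  · intro p hp
    have := h1 p hp
    change sub B (X 2) * G ∈ _
    by_cases hpL : p ∈ L.points
    · simp only [res, hpL, if_true] at this
      rcases Nat.eq_zero_or_pos (μ p) with h | h
      · simp [h]
      · rw [show μ p = 1 + (μ p - 1) by omega, pow_add, pow_one]
        refine Ideal.mul_mem_mul ?_ this
        apply Ideal.subset_span
        exact ⟨hlh, by rw [eval_sub, eval_X]; exact (hL _).1 ((mem_points _ _).1 hpL)⟩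
    · simp only [res, hpL, if_false] at this
      exact Ideal.mul_mem_left _ _ this
  · change (sub B (X 2) * G).IsHomogeneous _
    rw [add_comm]
    exact hlh.mul h2

end KC

namespace KC
open MvPolynomial
variable {K : Type} [Field K]

lemma line_eq {L M : ProjLine K} {p q : P2 K} (hpq : p ≠ q) (h1 : p ∈ L.points) (h2 : q ∈ L.points)
    (h3 : p ∈ M.points) (h4 : q ∈ M.points) : L = M := by
  rw [mem_points] at *
  have hli := Projectivization.linearIndependent_pair_iff_ne.2 hpq
  have hr := finrank_span_eq_card hli
  have key : ∀ N : ProjLine K, p.rep ∈ N.toSubmodule → q.rep ∈ N.toSubmodule →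
      Submodule.span K (Set.range ![p.rep, q.rep]) = N.toSubmodule := by
    intro N hp hq
    apply Submodule.eq_of_le_of_finrank_eq
    · rw [Submodule.span_le]
      rintro _ ⟨i, rfl⟩
      fin_cases i
      · exact hp
      · exact hq
    · rw [hr, N.finrank_eq_two]; simp
  have := (key L h1 h2).symm.trans (key M h3 h4)
  cases L; cases M; simp at this; subst this; rfl

lemma exists_line {p q : P2 K} (hpq : p ≠ q) : ∃ L : ProjLine K, p ∈ L.points ∧ q ∈ L.points := by
  have hli := Projectivization.linearIndependent_pair_iff_ne.2 hpq
  have hr := finrank_span_eq_card hli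
  refine ⟨⟨Submodule.span K (Set.range ![p.rep, q.rep]), by rw [hr]; simp⟩, ?_, ?_⟩
  · rw [mem_points]; exact Submodule.subset_span ⟨0, rfl⟩
  · rw [mem_points]; exact Submodule.subset_span ⟨1, rfl⟩

lemma exists_line_one (p : P2 K) : ∃ L : ProjLine K, p ∈ L.points := by
  obtain ⟨v, hv⟩ : ∃ v, v ∉ p.submodule := by
    by_contra! h
    have h2 := p.finrank_submodule
    rw [(Submodule.eq_top_iff'.2 h), finrank_top] at h2
    simp at h2
  have hv0 : v ≠ 0 := by rintro rfl; exact hv (zero_mem _)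
  have hne : p ≠ Projectivization.mk K v hv0 := by
    rintro rfl
    exact hv (by rw [Projectivization.submodule_mk]; exact Submodule.mem_span_singleton_self v)
  obtain ⟨L, h, _⟩ := exists_line hne
  exact ⟨L, h⟩

def U (S : Finset (P2 K)) (μ : P2 K → ℕ) (t : ℕ) : Prop := D S μ t + dg S μ ≤ (t + 2).choose 2

lemma U_peel [Infinite K] {S : Finset (P2 K)} {μ : P2 K → ℕ} (L : ProjLine K) {t : ℕ}
    (h : U S (res L μ) t) (hl : ldeg S L μ ≤ t + 2) : U S μ (t + 1) := by
  have h1 := D_peel S μ L t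
  have h2 := dg_res S L μ
  unfold U at *
  have h3 := Nat.choose_succ_succ' (t + 2) 1
  rw [Nat.choose_one_right] at h3
  norm_num at h3
  change _ ≤ (t + 2 + 1).choose 2
  omega

lemma U_zero {S : Finset (P2 K)} {μ : P2 K → ℕ} {t : ℕ} (h : ∀ p ∈ S, μ p = 0) : U S μ t := by
  have : dg S μ = 0 := by
    rw [dg]; apply Finset.sum_eq_zero; intro p hp; simp [h p hp]
  rw [U, this]
  exact D_le S μ t

lemma sum_res {S : Finset (P2 K)} {μ : P2 K → ℕ} (L : ProjLine K) (h1 : ∀ p ∈ S, μ p ≤ 1) :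
    ∑ p ∈ S, μ p = ∑ p ∈ S, res L μ p + ldeg S L μ := by
  classical
  simp only [ldeg, Finset.sum_filter, ← Finset.sum_add_distrib]
  refine Finset.sum_congr rfl fun p hp => ?_
  have := h1 p hp
  by_cases h : p ∈ L.points
  · simp only [res, h, if_true]; omega
  · simp [res, h]

lemma res_le (L : ProjLine K) (μ : P2 K → ℕ) (p : P2 K) : res L μ p ≤ μ p := by
  classical
  by_cases h : p ∈ L.points <;> simp [res, h]

lemma U_pts [Infinite K] {S : Finset (P2 K)} (t : ℕ) : ∀ {μ : P2 K → ℕ} (_ : ∀ p ∈ S, μ p ≤ 1)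
    (_ : ∑ p ∈ S, μ p ≤ t + 1), U S μ t := by
  classical
  induction t with
  | zero =>
    intro μ h1 hs
    by_cases h0 : ∀ p ∈ S, μ p = 0
    · exact U_zero h0
    push Not at h0
    obtain ⟨p, hp, hne⟩ := h0
    have hp1 : μ p = 1 := by have := h1 p hp; omega
    have hdg : dg S μ = ∑ p ∈ S, μ p := by
      refine Finset.sum_congr rfl fun q hq => ?_
      have := h1 q hq
      interval_cases μ q <;> simp
    have hbot : Dsub S μ 0 = ⊥ := by
      rw [eq_bot_iff]
      intro F hF
      obtain ⟨hF1, hF2⟩ := mem_Dsub.1 hF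
      have h2 : pointIdeal p ≤ RingHom.ker (eval p.rep) := by
        rw [pointIdeal, Ideal.span_le]
        rintro f ⟨_, hf⟩
        exact hf
      have h3 := hF1 p hp
      rw [hp1, pow_one] at h3
      have h4 : eval p.rep F = 0 := h2 h3
      rw [← totalDegree_zero_iff_isHomogeneous, totalDegree_eq_zero_iff_eq_C] at hF2
      rw [hF2, eval_C] at h4
      rw [hF2, h4]
      simp
    have : D S μ 0 = 0 := by rw [D, hbot]; simp
    rw [U, this, hdg]
    simpa using hs
  | succ t ih =>
    intro μ h1 hs
    by_cases h0 : ∀ p ∈ S, μ p = 0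
    · exact U_zero h0
    push Not at h0
    obtain ⟨p, hp, hne⟩ := h0
    obtain ⟨L, hL⟩ := exists_line_one p
    have e := sum_res L h1
    have hl : μ p ≤ ldeg S L μ := by
      rw [ldeg]
      exact Finset.single_le_sum (f := μ) (fun _ _ => Nat.zero_le _) (by simp [hp, hL])
    refine U_peel L (ih (fun q hq => (res_le L μ q).trans (h1 q hq)) ?_) ?_ <;> omega

lemma U_noncol [Infinite K] {S : Finset (P2 K)} {t : ℕ} {μ : P2 K → ℕ} (h1 : ∀ p ∈ S, μ p ≤ 1)
    (hs : ∑ p ∈ S, μ p ≤ t + 2) {a b c : P2 K} (ha : a ∈ S) (hb : b ∈ S) (hc : c ∈ S)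
    (hab : a ≠ b) (ha1 : μ a = 1) (hb1 : μ b = 1) (hc1 : μ c = 1) (L : ProjLine K)
    (haL : a ∈ L.points) (hbL : b ∈ L.points) (hcL : c ∉ L.points) : U S μ t := by
  classical
  have e := sum_res L h1
  have hl : 2 ≤ ldeg S L μ := by
    rw [ldeg]
    calc 2 = ∑ p ∈ {a, b}, μ p := by rw [Finset.sum_pair hab, ha1, hb1]
      _ ≤ _ := Finset.sum_le_sum_of_subset (by
        intro x hx
        simp only [Finset.mem_insert, Finset.mem_singleton] at hx
        rcases hx with rfl | rfl <;> simp [*])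
  have hr : 1 ≤ ∑ p ∈ S, res L μ p := by
    have : res L μ c = 1 := by simp [res, hcL, hc1]
    rw [← this]
    exact Finset.single_le_sum (fun _ _ => Nat.zero_le _) hc
  obtain ⟨t, rfl⟩ : ∃ t', t = t' + 1 := ⟨t - 1, by omega⟩
  refine U_peel L (U_pts t (fun q hq => (res_le L μ q).trans (h1 q hq)) ?_) ?_ <;> omega

open Classical in
noncomputable def rA (A : Finset (ProjLine K)) (p : P2 K) : ℕ := (A.filter (fun L => p ∈ L.points)).card

open Classical in
noncomputable def on (S : Finset (P2 K)) (L : ProjLine K) : Finset (P2 K) :=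
  S.filter (fun p => p ∈ L.points)

open Classical in
lemma sum_rA (S : Finset (P2 K)) (A : Finset (ProjLine K)) :
    ∑ p ∈ S, rA A p = ∑ L ∈ A, (on S L).card := by
  simp only [rA, on, Finset.card_filter]
  rw [Finset.sum_comm]

lemma card_on_on {S : Finset (P2 K)} {L M : ProjLine K} (h : L ≠ M) : (on (on S L) M).card ≤ 1 := by
  classical
  rw [Finset.card_le_one]
  intro p hp q hq
  simp only [on, Finset.mem_filter] at hp hq
  by_contra hpq
  exact h (line_eq hpq hp.1.2 hq.1.2 hp.2 hq.2)

lemma on_on_self {S : Finset (P2 K)} {L : ProjLine K} : on (on S L) L = on S L := by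
  classical
  simp [on, Finset.filter_filter]

open Classical in
lemma rA_insert {A : Finset (ProjLine K)} {M : ProjLine K} (hM : M ∉ A) (p : P2 K) :
    rA (insert M A) p = rA A p + if p ∈ M.points then 1 else 0 := by
  simp only [rA, Finset.card_filter]
  rw [Finset.sum_insert hM, add_comm]

open Classical in
lemma res_rA {A : Finset (ProjLine K)} {M : ProjLine K} (hM : M ∉ A)
    (m : ℕ) (g : P2 K → ℕ) :
    res M (fun p => m - (g p + rA A p)) = fun p => m - (g p + rA (insert M A) p) := by
  funext p
  have := rA_insert hM p
  by_cases h : p ∈ M.points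
  · simp only [h, if_true] at this
    simp only [res, h, if_true]
    omega
  · simp only [h, if_false] at this
    simp only [res, h, if_false]
    omega

lemma ldeg_eq (S : Finset (P2 K)) (L : ProjLine K) (μ : P2 K → ℕ) :
    ldeg S L μ = ∑ p ∈ on S L, μ p := rfl

end KC

namespace KC
open MvPolynomial
variable {K : Type} [Field K]

/-- The combinatorial data. -/
structure Conf (S : Finset (P2 K)) (Ω : Finset (ProjLine K)) (s : ℕ) : Prop where
  two_le : 2 ≤ s
  cardL : Ω.card = s
  cardS : 2 * S.card ≤ s * (s + 1)
  on_card : ∀ L ∈ Ω, (on S L).card = s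
  max : ∀ L, (on S L).card = s → L ∈ Ω

variable {S : Finset (P2 K)} {Ω : Finset (ProjLine K)} {s : ℕ}

lemma Conf.sum_r (h : Conf S Ω s) : ∑ p ∈ S, rA Ω p = s * s := by
  rw [sum_rA, Finset.sum_congr rfl h.on_card]
  simp [h.cardL]

open Classical in
lemma Conf.sum_on_le (h : Conf S Ω s) {L : ProjLine K} (hL : L ∈ Ω) :
    ∑ p ∈ on S L, rA Ω p + 1 ≤ 2 * s := by
  rw [sum_rA, ← Finset.add_sum_erase _ _ hL, on_on_self, h.on_card L hL]
  have : ∑ M ∈ Ω.erase L, (on (on S L) M).card ≤ ∑ M ∈ Ω.erase L, 1 := by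
    refine Finset.sum_le_sum fun M hM => card_on_on (Finset.ne_of_mem_erase hM).symm
  rw [Finset.sum_const, Finset.card_erase_of_mem hL, h.cardL] at this
  have := h.two_le
  simp at *
  omega

open Classical in
lemma sum_sq : ∑ p ∈ S, rA Ω p * rA Ω p = ∑ L ∈ Ω, ∑ p ∈ on S L, rA Ω p := by
  simp only [on, Finset.sum_filter]
  rw [Finset.sum_comm]
  refine Finset.sum_congr rfl fun p _ => ?_
  rw [← Finset.sum_filter, Finset.sum_const, smul_eq_mul, rA]

lemma Conf.main (h : Conf S Ω s) : (∀ p ∈ S, rA Ω p = 1 ∨ rA Ω p = 2) ∧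
    ∀ L ∈ Ω, ∑ p ∈ on S L, rA Ω p + 1 = 2 * s := by
  have h1 : (∑ p ∈ S, (rA Ω p : ℤ)) = s * s := by exact_mod_cast h.sum_r
  have h2 : (∑ p ∈ S, (rA Ω p : ℤ) * rA Ω p) = ∑ L ∈ Ω, ∑ p ∈ on S L, (rA Ω p : ℤ) := by
    exact_mod_cast sum_sq (S := S) (Ω := Ω)
  have h3 : ∀ L ∈ Ω, (0 : ℤ) ≤ 2 * s - 1 - ∑ p ∈ on S L, (rA Ω p : ℤ) := by
    intro L hL
    have : (∑ p ∈ on S L, (rA Ω p : ℤ)) + 1 ≤ 2 * s := by exact_mod_cast h.sum_on_le hL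
    linarith
  have h4 : ∀ p ∈ S, (0 : ℤ) ≤ ((rA Ω p : ℤ) - 1) * (rA Ω p - 2) := by
    intro p _
    rcases le_or_gt (rA Ω p : ℤ) 1 with h | h
    · nlinarith
    · have : (2 : ℤ) ≤ rA Ω p := h
      nlinarith
  have h5 : ∑ p ∈ S, ((rA Ω p : ℤ) - 1) * (rA Ω p - 2) +
      ∑ L ∈ Ω, (2 * (s : ℤ) - 1 - ∑ p ∈ on S L, (rA Ω p : ℤ)) ≤ 0 := by
    have e1 : ∑ p ∈ S, ((rA Ω p : ℤ) - 1) * (rA Ω p - 2) =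
        ∑ p ∈ S, (rA Ω p : ℤ) * rA Ω p - 3 * ∑ p ∈ S, (rA Ω p : ℤ) + 2 * S.card := by
      rw [Finset.mul_sum, ← Finset.sum_sub_distrib, mul_comm (2 : ℤ), ← nsmul_eq_mul,
        ← Finset.sum_const, ← Finset.sum_add_distrib]
      refine Finset.sum_congr rfl fun p _ => by ring
    rw [e1, h2, h1, Finset.sum_sub_distrib, Finset.sum_const, h.cardL, nsmul_eq_mul]
    have : (2 * S.card : ℤ) ≤ s * (s + 1) := by exact_mod_cast h.cardS
    linarith
  have h6 := Finset.sum_nonneg h3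
  have h7 := Finset.sum_nonneg h4
  have h8 := (Finset.sum_eq_zero_iff_of_nonneg h3).1 (by linarith)
  have h9 := (Finset.sum_eq_zero_iff_of_nonneg h4).1 (by linarith)
  constructor
  · intro p hp
    rcases mul_eq_zero.1 (h9 p hp) with h | h
    · left; omega
    · right; omega
  · intro L hL
    have := h8 L hL
    have : (∑ p ∈ on S L, (rA Ω p : ℤ)) + 1 = 2 * s := by linarith
    exact_mod_cast this

open Classical in
lemma Conf.meet (h : Conf S Ω s) {L M : ProjLine K} (hL : L ∈ Ω) (hM : M ∈ Ω) (hne : L ≠ M) :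
    (on (on S L) M).card = 1 := by
  have h1 := h.main.2 L hL
  rw [sum_rA, ← Finset.add_sum_erase _ _ hL, on_on_self, h.on_card L hL] at h1
  have h2 : ∀ N ∈ Ω.erase L, (on (on S L) N).card ≤ 1 :=
    fun N hN => card_on_on (Finset.ne_of_mem_erase hN).symm
  have h3 := (Finset.sum_eq_sum_iff_of_le h2).1 (by
    rw [Finset.sum_const, Finset.card_erase_of_mem hL, h.cardL]
    have := h.two_le
    simp
    omega)
  exact h3 M (Finset.mem_erase.2 ⟨hne.symm, hM⟩)

lemma Conf.sum_on_A (h : Conf S Ω s) {M : ProjLine K} (hM : M ∈ Ω) {A : Finset (ProjLine K)}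
    (hA : A ⊆ Ω) (hMA : M ∉ A) : ∑ p ∈ on S M, rA A p = A.card := by
  rw [sum_rA, Finset.sum_congr rfl (fun L hL => h.meet hM (hA hL) (by rintro rfl; exact hMA hL))]
  simp

lemma Conf.sum_one (h : Conf S Ω s) : ∑ p ∈ S, rA Ω p * (2 - rA Ω p) = s := by
  have h1 := h.sum_r
  have h2 := sum_sq (S := S) (Ω := Ω)
  have h3 : ∑ L ∈ Ω, ∑ p ∈ on S L, rA Ω p + s = s * (2 * s) := by
    have := Finset.sum_congr rfl h.main.2
    rw [Finset.sum_add_distrib] at this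
    simpa [h.cardL] using this
  have h4 : ∑ p ∈ S, rA Ω p * (2 - rA Ω p) + ∑ p ∈ S, rA Ω p * rA Ω p = 2 * ∑ p ∈ S, rA Ω p := by
    rw [← Finset.sum_add_distrib, Finset.mul_sum]
    refine Finset.sum_congr rfl fun p hp => ?_
    rcases h.main.1 p hp with e | e <;> simp [e]
  rw [h1, h2] at h4
  have : s * (2 * s) = 2 * (s * s) := by ring
  omega

lemma mem_on {L : ProjLine K} {p : P2 K} : p ∈ on S L ↔ p ∈ S ∧ p ∈ L.points := by
  classical
  simp [on]

/-- each line has a point of multiplicity one -/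
lemma Conf.exists_one (h : Conf S Ω s) {L : ProjLine K} (hL : L ∈ Ω) :
    ∃ p ∈ on S L, rA Ω p = 1 := by
  by_contra! hne
  have h1 := h.main.2 L hL
  have : ∑ p ∈ on S L, rA Ω p = ∑ p ∈ on S L, 2 := by
    refine Finset.sum_congr rfl fun p hp => ?_
    exact (h.main.1 p (mem_on.1 hp).1).resolve_left (hne p hp)
  rw [this, Finset.sum_const, h.on_card L hL] at h1
  simp at h1
  omega

lemma Conf.unique_one (h : Conf S Ω s) {L : ProjLine K} (hL : L ∈ Ω) {p q : P2 K}
    (hp : p ∈ on S L) (hq : q ∈ on S L) (hp1 : rA Ω p = 1) (hq1 : rA Ω q = 1) : p = q := by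
  classical
  by_contra hne
  have h1 := h.main.2 L hL
  have h2 : ∑ p ∈ on S L, (2 - rA Ω p) + ∑ p ∈ on S L, rA Ω p = ∑ p ∈ on S L, 2 := by
    rw [← Finset.sum_add_distrib]
    refine Finset.sum_congr rfl fun p hp => ?_
    rcases h.main.1 p (mem_on.1 hp).1 with e | e <;> simp [e]
  rw [Finset.sum_const, h.on_card L hL] at h2
  have h3 : 2 ≤ ∑ p ∈ on S L, (2 - rA Ω p) :=
    calc 2 = ∑ p ∈ {p, q}, (2 - rA Ω p) := by rw [Finset.sum_pair hne, hp1, hq1]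
      _ ≤ _ := Finset.sum_le_sum_of_subset (by
        intro x hx
        simp only [Finset.mem_insert, Finset.mem_singleton] at hx
        rcases hx with rfl | rfl <;> simp [*])
  simp at h2
  omega

lemma rA_pos_iff {A : Finset (ProjLine K)} {p : P2 K} : 0 < rA A p ↔ ∃ L ∈ A, p ∈ L.points := by
  classical
  simp [rA, Finset.card_pos, Finset.Nonempty]

lemma Conf.noncol (h : Conf S Ω s) : ∃ a ∈ S, ∃ b ∈ S, ∃ c ∈ S, a ≠ b ∧ rA Ω a = 1 ∧
    rA Ω b = 1 ∧ rA Ω c = 1 ∧ ∃ L : ProjLine K, a ∈ L.points ∧ b ∈ L.points ∧ c ∉ L.points := by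
  classical
  obtain ⟨M, hM, N, hN, hMN⟩ := Finset.one_lt_card.1 (by rw [h.cardL]; exact h.two_le)
  obtain ⟨a, ha, ha1⟩ := h.exists_one hM
  obtain ⟨b, hb, hb1⟩ := h.exists_one hN
  have hab : a ≠ b := by
    rintro rfl
    have : 1 < rA Ω a := by
      rw [rA, Finset.one_lt_card]
      exact ⟨M, by simp [hM, (mem_on.1 ha).2], N, by simp [hN, (mem_on.1 hb).2], hMN⟩
    omega
  obtain ⟨L, haL, hbL⟩ := exists_line hab
  refine ⟨a, (mem_on.1 ha).1, b, (mem_on.1 hb).1, ?_⟩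
  by_contra! hcon
  have hall : ∀ c ∈ S, rA Ω c = 1 → c ∈ L.points :=
    fun c hc hc1 => hcon c hc hab ha1 hb1 hc1 L haL hbL
  have hLn : L ∉ Ω := fun hL => hab (h.unique_one hL (mem_on.2 ⟨(mem_on.1 ha).1, haL⟩)
    (mem_on.2 ⟨(mem_on.1 hb).1, hbL⟩) ha1 hb1)
  apply hLn
  apply h.max
  have e : on S L = S.filter (fun p => rA Ω p = 1) := by
    ext p
    rw [mem_on, Finset.mem_filter]
    refine and_congr_right fun hp => ⟨fun hpL => ?_, fun h1 => hall p hp h1⟩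
    by_contra hne
    have hpos : 0 < rA Ω p := by rcases h.main.1 p hp with e | e <;> omega
    obtain ⟨M', hM', hpM⟩ := rA_pos_iff.1 hpos
    obtain ⟨q, hq, hq1⟩ := h.exists_one hM'
    have hpq : p ≠ q := by rintro rfl; exact hne hq1
    have := line_eq hpq hpL (hall q (mem_on.1 hq).1 hq1) hpM (mem_on.1 hq).2
    exact hLn (this ▸ hM')
  rw [e, Finset.card_filter, ← h.sum_one]
  refine Finset.sum_congr rfl fun p hp => ?_
  rcases h.main.1 p hp with e | e <;> simp [e]

/-- stage 1 -/
lemma Conf.stage1 [Infinite K] (h : Conf S Ω s) {m t : ℕ} (hm : 2 ≤ m) (ht1 : t + 1 ≤ m * s)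
    (ht2 : m * s ≤ t + 2) (A : Finset (ProjLine K)) :
    A ⊆ Ω → D S (fun _ => m) t = D S (fun p => m - (0 + rA A p)) (t - A.card) := by
  classical
  have hts : s ≤ t := by
    have := Nat.mul_le_mul_right s hm
    have := h.two_le
    omega
  induction A using Finset.induction_on with
  | empty => intro _; simp [rA]
  | insert M A hMA ih =>
    intro hsub
    have hA : A ⊆ Ω := fun x hx => hsub (Finset.mem_insert_of_mem hx)
    have hM : M ∈ Ω := hsub (Finset.mem_insert_self _ _)
    have hcard := Finset.card_le_card hsub
    rw [Finset.card_insert_of_notMem hMA, h.cardL] at hcard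
    rw [ih hA, Finset.card_insert_of_notMem hMA]
    obtain ⟨t', ht'⟩ : ∃ t', t - A.card = t' + 1 := ⟨t - A.card - 1, by omega⟩
    have e1 : t - (A.card + 1) = t' := by omega
    rw [e1, ht', ← res_rA hMA m (fun _ => 0)]
    refine le_antisymm ?_ (D_mul _ _ _ _)
    refine (D_peel S _ M t').trans ?_
    have hl : m * s ≤ ldeg S M (fun p => m - (0 + rA A p)) + A.card := by
      rw [ldeg_eq, ← h.sum_on_A hM hA hMA, ← Finset.sum_add_distrib, ← h.on_card M hM,
        mul_comm, ← smul_eq_mul, ← Finset.sum_const]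
      refine Finset.sum_le_sum fun p _ => by omega
    omega

/-- stage 2 -/
lemma Conf.stage2 [Infinite K] (h : Conf S Ω s) {m c t : ℕ} (hc : 1 ≤ c) (hm : c + 2 ≤ m)
    (ht : (m - c) * s ≤ t + 2) (A : Finset (ProjLine K)) :
    A ⊆ Ω → U S (fun p => m - (c * rA Ω p + rA A p)) (t - A.card) →
      U S (fun p => m - c * rA Ω p) t := by
  classical
  have hts : s ≤ t := by
    have := Nat.mul_le_mul_right s (show 2 ≤ m - c by omega)
    have := h.two_le
    omega
  induction A using Finset.induction_on with
  | empty => intro _; simp [rA]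
  | insert M A hMA ih =>
    intro hsub hU
    have hA : A ⊆ Ω := fun x hx => hsub (Finset.mem_insert_of_mem hx)
    have hM : M ∈ Ω := hsub (Finset.mem_insert_self _ _)
    have hcard := Finset.card_le_card hsub
    rw [Finset.card_insert_of_notMem hMA, h.cardL] at hcard
    apply ih hA
    obtain ⟨t', ht'⟩ : ∃ t', t - A.card = t' + 1 := ⟨t - A.card - 1, by omega⟩
    rw [Finset.card_insert_of_notMem hMA, show t - (A.card + 1) = t' by omega,
      ← res_rA hMA m (fun p => c * rA Ω p)] at hU
    rw [ht']
    refine U_peel M hU ?_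
    have h1 := h.sum_on_A hM hA hMA
    have h2 := h.main.2 M hM
    have h3 : ldeg S M (fun p => m - (c * rA Ω p + rA A p)) + ∑ p ∈ on S M, rA A p +
        ∑ p ∈ on S M, rA Ω p ≤ (m - c + 1) * s := by
      rw [ldeg_eq, ← Finset.sum_add_distrib, ← Finset.sum_add_distrib, ← h.on_card M hM,
        mul_comm, ← smul_eq_mul, ← Finset.sum_const]
      refine Finset.sum_le_sum fun p hp => ?_
      have hlt : rA A p + 1 ≤ rA Ω p := by
        have e := rA_insert hMA p
        rw [if_pos (mem_on.1 hp).2] at e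
        rw [← e]
        exact Finset.card_le_card (Finset.filter_subset_filter _ hsub)
      rcases h.main.1 p (mem_on.1 hp).1 with e | e
      · rw [e] at hlt ⊢; omega
      · rw [e] at hlt ⊢; omega
    rw [add_mul] at h3
    have := h.two_le
    omega

lemma Conf.final [Infinite K] (h : Conf S Ω s) {m : ℕ} (k : ℕ) (hk : k + 2 ≤ m) :
    ∀ t, (k + 1) * s ≤ t + 2 → U S (fun p => m - (m - 1 - k) * rA Ω p) t := by
  induction k with
  | zero =>
    intro t ht
    obtain ⟨a, ha, b, hb, c, hc, hab, ha1, hb1, hc1, L, haL, hbL, hcL⟩ := h.noncol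
    refine U_noncol ?_ ?_ ha hb hc hab ?_ ?_ ?_ L haL hbL hcL
    · intro p hp
      rcases h.main.1 p hp with e | e <;> rw [e] <;> omega
    · rw [zero_add, one_mul] at ht
      refine le_trans (le_of_eq ?_) ht
      rw [← h.sum_one]
      refine Finset.sum_congr rfl fun p hp => ?_
      rcases h.main.1 p hp with e | e <;> rw [e] <;> omega
    · rw [ha1]; omega
    · rw [hb1]; omega
    · rw [hc1]; omega
  | succ k ih =>
    intro t ht
    refine h.stage2 (by omega) (by omega) ?_ Ω (Finset.Subset.refl _) ?_
    · rwa [show m - (m - 1 - (k + 1)) = k + 1 + 1 by omega]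
    · have e : (fun p => m - ((m - 1 - (k + 1)) * rA Ω p + rA Ω p)) =
          fun p : P2 K => m - (m - 1 - k) * rA Ω p := by
        funext p
        rw [show m - 1 - k = m - 1 - (k + 1) + 1 by omega, add_mul, one_mul]
      rw [e]
      apply ih (by omega)
      rw [h.cardL]
      rw [add_mul (k + 1) 1] at ht
      omega

lemma Conf.dim [Infinite K] (h : Conf S Ω s) {m t : ℕ} (hm : 2 ≤ m) (ht1 : t + 1 ≤ m * s)
    (ht2 : m * s ≤ t + 2) :
    D S (fun _ => m) t + dg S (fun p => m - rA Ω p) = (t - s + 2).choose 2 := by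
  rw [h.stage1 hm ht1 ht2 Ω (Finset.Subset.refl _), h.cardL]
  simp only [zero_add]
  refine le_antisymm ?_ (D_ge _ _ _)
  have := h.final (m := m) (m - 2) (by omega) (t - s) (by
    rw [show m - 2 + 1 = m - 1 by omega, Nat.sub_mul, one_mul]
    omega)
  rw [show m - 1 - (m - 2) = 1 by omega] at this
  simpa [U] using this

lemma hilb_eq (S : Finset (P2 K)) (m t : ℕ) :
    hilb (fatIdeal (S : Set (P2 K)) m) t = (t + 2).choose 2 - D S (fun _ => m) t := by
  rw [hilb, finrank_hs]
  rfl

lemma Conf.delta [Infinite K] (h : Conf S Ω s) {m : ℕ} (hm : 2 ≤ m) :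
    deltaHilb (fatIdeal (S : Set (P2 K)) m) ((m : ℤ) * s - 1) = s := by
  have hs := h.two_le
  obtain ⟨n, hn⟩ : ∃ n, m * s = n + s + 2 := ⟨m * s - s - 2, by
    have := Nat.mul_le_mul_right s hm
    omega⟩
  have d1 := h.dim (t := n + s + 1) hm (by omega) (by omega)
  have d2 := h.dim (t := n + s) hm (by omega) (by omega)
  have l1 := D_le S (fun _ => m) (n + s + 1)
  have l2 := D_le S (fun _ => m) (n + s)
  have e : (m : ℤ) * s = n + s + 2 := by exact_mod_cast hn
  rw [deltaHilb, hilbZ, hilbZ, e, if_neg (by omega), if_neg (by omega),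
    show ((n : ℤ) + s + 2 - 1).toNat = n + s + 1 by omega,
    show ((n : ℤ) + s + 2 - 1 - 1).toNat = n + s by omega, hilb_eq, hilb_eq]
  rw [show n + s + 1 - s = n + 1 by omega] at d1
  rw [show n + s - s = n by omega] at d2
  have c1 : (n + 1 + 2).choose 2 = (n + 2) + (n + 2).choose 2 := by
    have := Nat.choose_succ_succ' (n + 2) 1
    simpa using this
  have c2 : (n + s + 1 + 2).choose 2 = (n + s + 2) + (n + s + 2).choose 2 := by
    have := Nat.choose_succ_succ' (n + s + 2) 1
    simpa using this
  omega

end KC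

/-- **Theorem (case `d_s = s`, exactly `s` lines).** Let `X` be a
k-configuration of type `(1,2,…,s)`, `s ≥ 2`, with exactly `s` lines containing
exactly `s` points of `X`. Then `ΔH_{mX}(m·s − 1) = s` for all `m ≥ 2`. -/
theorem kconfig_delta_s {K : Type} [Field K] [IsAlgClosed K] {s : ℕ} (hs : 2 ≤ s)
    (X : Set (P2 K)) (Xs : Fin s → Set (P2 K)) (Ls : Fin s → ProjLine K)
    (hX : IsKConfig X (fun i : Fin s => i.1 + 1) Xs Ls)
    (hfin : {L : ProjLine K | (X ∩ L.points).ncard = s}.Finite)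
    (hcard : {L : ProjLine K | (X ∩ L.points).ncard = s}.ncard = s) :
    ∀ m : ℕ, 2 ≤ m → deltaHilb (fatIdeal X m) ((m : ℤ) * s - 1) = s := by
  classical
  intro m hm
  have : Infinite K := IsAlgClosed.instInfinite
  have hXf : ∀ i, (Xs i).Finite := fun i =>
    Set.finite_of_ncard_ne_zero (by rw [hX.card_eq i]; simp)
  let S : Finset (P2 K) := Finset.univ.biUnion (fun i => (hXf i).toFinset)
  have hS : X = (S : Set (P2 K)) := by
    rw [hX.union_eq]
    ext p
    simp [S]
  have hon : ∀ L : ProjLine K, (X ∩ L.points).ncard = (KC.on S L).card := by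
    intro L
    rw [← Set.ncard_coe_finset]
    congr 1
    ext p
    rw [Finset.mem_coe, KC.mem_on, Set.mem_inter_iff, hS, Finset.mem_coe]
  have hconf : KC.Conf S hfin.toFinset s := by
    refine ⟨hs, ?_, ?_, ?_, ?_⟩
    · exact (Set.ncard_eq_toFinset_card _ hfin).symm.trans hcard
    · have h1 : S.card ≤ ∑ i : Fin s, (i.1 + 1) := by
        refine Finset.card_biUnion_le.trans (le_of_eq ?_)
        refine Finset.sum_congr rfl fun i _ => ?_
        rw [← Set.ncard_eq_toFinset_card _ (hXf i), hX.card_eq]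
      rw [Fin.sum_univ_eq_sum_range (fun i => i + 1) s] at h1
      have h2 := Finset.sum_range_id_mul_two (s + 1)
      rw [Finset.sum_range_succ'] at h2
      simp only [Nat.add_sub_cancel] at h2
      rw [mul_comm s]
      omega
    · intro L hL
      rw [← hon]
      simpa using hL
    · intro L hL
      rw [← hon] at hL
      simpa using hL
  have := hconf.delta hm
  rwa [← hS] at this
end
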